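/- arXiv:2406.06916 — 7 statements merged into one kernel-verified Lean document; each statement's English description precedes it below -/
import Mathlib

section
/- (Velocity Lemma.) For every ξ = (ξ₁,ξ₂,ξ₃) ∈ ℝ³, every x ≥ 0 and every s ≥ 0 such that x − s(ξ₁+u) ≥ 0, one has e^{−cν₀ s/2} · α̃(x − s(ξ₁+u), ξ) ≤ α̃(x,ξ) ≤ e^{cν₀ s/2} · α̃(x − s(ξ₁+u), ξ). -/
/-!
Along the characteristic with constant velocity `v = ξ₁ + u`, the squared weight
`q(s) = v² + (cν₀)² (x + s v)²` satisfies `|q'| = 2 |cν₀ v| |cν₀ (x + s v)| ≤ |cν₀| q` by AM-GM.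
Grönwall's inequality bounds the growth of `q` by `exp (|cν₀ s|)`, and taking square roots halves
the exponent. Following the characteristic backwards, that is replacing `s` by `-s`, gives the
lower bound.
-/

noncomputable section

/-- The kinetic weight `α̃(x,ξ) = √((ξ₁+u)² + (cν₀)² x²)`. -/
def alphaTilde (u c ν₀ : ℝ) (x : ℝ) (ξ : EuclideanSpace ℝ (Fin 3)) : ℝ :=
  Real.sqrt ((ξ 0 + u) ^ 2 + (c * ν₀) ^ 2 * x ^ 2)

section InnerProductSpace

variable {E : Type*} [NormedAddCommGroup E] [InnerProductSpace ℝ E]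

theorem abs_two_mul_inner_smul_le (t : ℝ) (w v : E) :
    |2 * inner ℝ w (t • v)| ≤ |t| * (‖v‖ ^ 2 + ‖w‖ ^ 2) := by
  calc |2 * inner ℝ w (t • v)| = |t| * (2 * |inner ℝ w v|) := by
        rw [real_inner_smul_right, abs_mul, abs_mul, abs_two]
        ring
    _ ≤ |t| * (2 * (‖w‖ * ‖v‖)) := by
        gcongr
        exact abs_real_inner_le_norm w v
    _ ≤ |t| * (‖v‖ ^ 2 + ‖w‖ ^ 2) := by
        gcongr
        linarith [two_mul_le_add_sq ‖w‖ ‖v‖]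

theorem norm_sq_add_norm_add_smul_sq_le (t : ℝ) (a v : E) :
    ‖v‖ ^ 2 + ‖a + t • v‖ ^ 2 ≤ Real.exp |t| * (‖v‖ ^ 2 + ‖a‖ ^ 2) := by
  -- Scaling time to `[0, 1]` puts the sign of `t` into the Grönwall constant `|t|`.
  let q : ℝ → ℝ := fun τ ↦ ‖v‖ ^ 2 + ‖a + τ • t • v‖ ^ 2
  have q_nonneg (τ : ℝ) : 0 ≤ q τ := by positivity
  have hasDerivAt_q (τ : ℝ) : HasDerivAt q (2 * inner ℝ (a + τ • t • v) (t • v)) τ := by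
    have hline : HasDerivAt (fun τ : ℝ ↦ a + τ • t • v) (t • v) τ := by
      simpa only [one_smul, id_eq] using ((hasDerivAt_id τ).smul_const (t • v)).const_add a
    exact hline.norm_sq.const_add _
  have norm_deriv_q_le (τ : ℝ) :
      ‖2 * inner ℝ (a + τ • t • v) (t • v)‖ ≤ |t| * ‖q τ‖ + 0 := by
    rw [add_zero, Real.norm_of_nonneg (q_nonneg τ)]
    exact abs_two_mul_inner_smul_le t (a + τ • t • v) v
  have gronwall : ‖q 1‖ ≤ gronwallBound ‖q 0‖ |t| 0 (1 - 0) :=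
    norm_le_gronwallBound_of_norm_deriv_right_le
      (fun τ _ ↦ (hasDerivAt_q τ).continuousAt.continuousWithinAt)
      (fun τ _ ↦ (hasDerivAt_q τ).hasDerivWithinAt) le_rfl (fun τ _ ↦ norm_deriv_q_le τ)
      1 (Set.right_mem_Icc.2 zero_le_one)
  rw [gronwallBound_ε0, Real.norm_of_nonneg (q_nonneg 1), Real.norm_of_nonneg (q_nonneg 0)]
    at gronwall
  simpa [q, mul_comm] using gronwall

end InnerProductSpace

theorem alphaTilde_add_mul_le (u c ν₀ x s : ℝ) (ξ : EuclideanSpace ℝ (Fin 3)) :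
    alphaTilde u c ν₀ (x + s * (ξ 0 + u)) ξ ≤
      Real.exp (|c * ν₀ * s| / 2) * alphaTilde u c ν₀ x ξ := by
  rw [alphaTilde, alphaTilde, Real.exp_half, ← Real.sqrt_mul (Real.exp_nonneg _)]
  apply Real.sqrt_le_sqrt
  have growth := norm_sq_add_norm_add_smul_sq_le (c * ν₀ * s) (c * ν₀ * x) (ξ 0 + u)
  simp only [Real.norm_eq_abs, sq_abs, smul_eq_mul] at growth
  convert growth using 2 <;> ring

theorem velocity_lemma_general (u ν₀ c : ℝ) (ξ : EuclideanSpace ℝ (Fin 3)) (x s : ℝ) :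
    Real.exp (-|c * ν₀ * s| / 2) * alphaTilde u c ν₀ (x - s * (ξ 0 + u)) ξ ≤
        alphaTilde u c ν₀ x ξ ∧
      alphaTilde u c ν₀ x ξ ≤
        Real.exp (|c * ν₀ * s| / 2) * alphaTilde u c ν₀ (x - s * (ξ 0 + u)) ξ := by
  constructor
  · rw [neg_div, Real.exp_neg, inv_mul_le_iff₀ (Real.exp_pos _)]
    simpa only [neg_mul, mul_neg, abs_neg, ← sub_eq_add_neg] using
      alphaTilde_add_mul_le u c ν₀ x (-s) ξ
  · simpa only [sub_add_cancel] using
      alphaTilde_add_mul_le u c ν₀ (x - s * (ξ 0 + u)) s ξ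

/-- Velocity Lemma: along the characteristic, whenever `x ≥ 0`
and `x − s(ξ₁+u) ≥ 0`,
`e^{−cν₀s/2}·α̃(x−s(ξ₁+u),ξ) ≤ α̃(x,ξ) ≤ e^{cν₀s/2}·α̃(x−s(ξ₁+u),ξ)`. -/
theorem velocity_lemma (u ν₀ c : ℝ) (hν₀ : 0 < ν₀) (hc : 0 < c)
    (ξ : EuclideanSpace ℝ (Fin 3)) (x s : ℝ)
    (hx : 0 ≤ x) (hs : 0 ≤ s) (hxs : 0 ≤ x - s * (ξ 0 + u)) :
    Real.exp (-(c * ν₀ * s) / 2) * alphaTilde u c ν₀ (x - s * (ξ 0 + u)) ξ ≤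
        alphaTilde u c ν₀ x ξ ∧
      alphaTilde u c ν₀ x ξ ≤
        Real.exp (c * ν₀ * s / 2) * alphaTilde u c ν₀ (x - s * (ξ 0 + u)) ξ := by
  have hcνs : |c * ν₀ * s| = c * ν₀ * s := abs_of_nonneg (by positivity)
  simpa only [hcνs] using velocity_lemma_general u ν₀ c ξ x s
end
end

section
/- For every x ∈ ℝ and ξ = (ξ₁,ξ₂,ξ₃) ∈ ℝ³ with α̃(x,ξ) > 0, the cut-off kinetic weight α(x,ξ) := χ(α̃(x,ξ)) is differentiable in x and satisfies |(ξ₁+u)·∂ₓα(x,ξ)| ≤ 2cν₀·α(x,ξ). -/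
noncomputable section

/-!
Since `α̃² = (ξ₁+u)² + (cν₀)²x²`, the derivative `(cν₀)²x / α̃` of `α̃` times `ξ₁+u` is
`cν₀ · (ξ₁+u)(cν₀x) / α̃`, which AM-GM bounds by `cν₀ α̃ / 2`. By the chain rule it remains to bound
`s χ'(s)` by a multiple of `χ(s)`. If `χ` is the identity up to `a` and constant from `b` on, the
factor `b / a` suffices: below `a` one has `s χ'(s) ≤ s = χ(s)`, while above `a` one has
`χ(s) ≥ χ(a) = a` and `s χ'(s) ≤ b`, because `χ'` vanishes beyond `b`.
-/

open Set

theorem monotoneOn_of_hasDerivAt_nonneg {D : Set ℝ} (hD : Convex ℝ D) {f f' : ℝ → ℝ}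
    (hf : ∀ s ∈ D, HasDerivAt f (f' s) s) (hf' : ∀ s ∈ D, 0 ≤ f' s) : MonotoneOn f D :=
  monotoneOn_of_hasDerivWithinAt_nonneg hD (HasDerivAt.continuousOn hf)
    (fun s hs => (hf s (interior_subset hs)).hasDerivWithinAt)
    fun s hs => hf' s (interior_subset hs)

section Cutoff

variable {χ : ℝ → ℝ} {a b M d s : ℝ}

theorem mul_deriv_le_of_eqOn_const (hb : 0 ≤ b) (hconst : EqOn χ (fun _ => M) (Ici b))
    (hs : 0 ≤ s) (hχ : HasDerivAt χ d s) (hd : d ≤ 1) : s * d ≤ b := by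
  rcases le_or_gt s b with hsb | hbs
  · exact (mul_le_of_le_one_right hs hd).trans hsb
  · have hχ₀ : HasDerivAt χ 0 s :=
      (hasDerivAt_const s M).congr_of_eventuallyEq
        (hconst.eventuallyEq_of_mem (Ici_mem_nhds hbs))
    simpa only [hχ.unique hχ₀, mul_zero] using hb

theorem mul_deriv_le_div_mul_of_eqOn_id_of_eqOn_const (ha : 0 < a) (hab : a ≤ b)
    (hmono : MonotoneOn χ (Ici 0)) (hid : EqOn χ id (Icc 0 a))
    (hconst : EqOn χ (fun _ => M) (Ici b)) (hs : 0 ≤ s) (hχ : HasDerivAt χ d s) (hd : d ≤ 1) :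
    s * d ≤ b / a * χ s := by
  rcases le_total s a with hsa | has
  · calc s * d ≤ s := mul_le_of_le_one_right hs hd
      _ ≤ b / a * s := le_mul_of_one_le_left hs ((one_le_div ha).2 hab)
      _ = b / a * χ s := by rw [hid ⟨hs, hsa⟩, id]
  · have hb : 0 ≤ b := ha.le.trans hab
    have ha_le : a ≤ χ s := calc
      a = χ a := (hid ⟨ha.le, le_rfl⟩).symm
      _ ≤ χ s := hmono ha.le hs has
    calc s * d ≤ b := mul_deriv_le_of_eqOn_const hb hconst hs hχ hd
      _ = b / a * a := (div_mul_cancel₀ b ha.ne').symm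
      _ ≤ b / a * χ s := by gcongr

end Cutoff

theorem hasDerivAt_sqrt_sq_add_sq_mul_sq {p k x : ℝ} (h : p ^ 2 + k ^ 2 * x ^ 2 ≠ 0) :
    HasDerivAt (fun y => √(p ^ 2 + k ^ 2 * y ^ 2)) (k ^ 2 * x / √(p ^ 2 + k ^ 2 * x ^ 2)) x := by
  have hsq : HasDerivAt (fun y => p ^ 2 + k ^ 2 * y ^ 2) (k ^ 2 * (2 * x)) x := by
    simpa using ((hasDerivAt_pow 2 x).const_mul (k ^ 2)).const_add (p ^ 2)
  convert hsq.sqrt h using 1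
  field_simp

theorem abs_mul_deriv_sqrt_sq_add_sq_mul_sq_le (p k x : ℝ) :
    |p * (k ^ 2 * x / √(p ^ 2 + k ^ 2 * x ^ 2))| ≤ |k| / 2 * √(p ^ 2 + k ^ 2 * x ^ 2) := by
  set r := √(p ^ 2 + k ^ 2 * x ^ 2)
  have hr : 0 ≤ r := Real.sqrt_nonneg _
  have hr_sq : r ^ 2 = p ^ 2 + k ^ 2 * x ^ 2 := Real.sq_sqrt (by positivity)
  have am_gm : |p| * |k * x| ≤ r ^ 2 / 2 := by
    have h := two_mul_le_add_sq |p| |k * x|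
    rw [sq_abs, sq_abs, mul_pow, ← hr_sq] at h
    linarith
  calc |p * (k ^ 2 * x / r)| = |k * (p * (k * x)) / r| := by ring_nf
    _ = |k| * (|p| * |k * x|) / r := by rw [abs_div, abs_mul, abs_mul p, abs_of_nonneg hr]
    _ ≤ |k| / 2 * r := div_le_of_le_mul₀ hr (by positivity) <| calc
      |k| * (|p| * |k * x|) ≤ |k| * (r ^ 2 / 2) := by gcongr
      _ = |k| / 2 * r * r := by ring

theorem alpha_deriv_bound_general {u c ν₀ x a b M d : ℝ} {ξ : EuclideanSpace ℝ (Fin 3)}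
    {χ : ℝ → ℝ} (ha : 0 < a) (hab : a ≤ b) (hmono : MonotoneOn χ (Ici 0))
    (hid : EqOn χ id (Icc 0 a)) (hconst : EqOn χ (fun _ => M) (Ici b))
    (hpos : 0 < alphaTilde u c ν₀ x ξ) (hχ : HasDerivAt χ d (alphaTilde u c ν₀ x ξ))
    (hd : d ≤ 1) :
    ∃ d' : ℝ, HasDerivAt (fun y => χ (alphaTilde u c ν₀ y ξ)) d' x ∧
      |(ξ 0 + u) * d'| ≤ b / (2 * a) * |c * ν₀| * χ (alphaTilde u c ν₀ x ξ) := by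
  set s := alphaTilde u c ν₀ x ξ
  have hα : HasDerivAt (fun y => alphaTilde u c ν₀ y ξ) ((c * ν₀) ^ 2 * x / s) x :=
    hasDerivAt_sqrt_sq_add_sq_mul_sq (Real.sqrt_pos.1 hpos).ne'
  have hα_le : |(ξ 0 + u) * ((c * ν₀) ^ 2 * x / s)| ≤ |c * ν₀| / 2 * s :=
    abs_mul_deriv_sqrt_sq_add_sq_mul_sq_le (ξ 0 + u) (c * ν₀) x
  have hd₀ : 0 ≤ d :=
    hχ.hasDerivWithinAt.derivWithin (uniqueDiffOn_Ici 0 s hpos.le) ▸ hmono.derivWithin_nonneg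
  have hχ_le : s * d ≤ b / a * χ s :=
    mul_deriv_le_div_mul_of_eqOn_id_of_eqOn_const ha hab hmono hid hconst hpos.le hχ hd
  refine ⟨_, hχ.comp x hα, ?_⟩
  calc |(ξ 0 + u) * (d * ((c * ν₀) ^ 2 * x / s))|
      = d * |(ξ 0 + u) * ((c * ν₀) ^ 2 * x / s)| := by
        rw [mul_left_comm, abs_mul d, abs_of_nonneg hd₀]
    _ ≤ d * (|c * ν₀| / 2 * s) := by gcongr
    _ = |c * ν₀| / 2 * (s * d) := by ring
    _ ≤ |c * ν₀| / 2 * (b / a * χ s) := mul_le_mul_of_nonneg_left hχ_le (by positivity)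
    _ = b / (2 * a) * |c * ν₀| * χ s := by ring

/-- wherever `α̃(x,ξ) > 0`, the cut-off kinetic weight
`α(x,ξ) = χ(α̃(x,ξ))` is differentiable in `x` and satisfies
`|(ξ₁+u)·∂ₓα(x,ξ)| ≤ 2cν₀·α(x,ξ)`. -/
theorem alpha_deriv_bound (u ν₀ c : ℝ) (hν₀ : 0 < ν₀) (hc : 0 < c)
    (χ χ' : ℝ → ℝ)
    (hderiv : ∀ s ≥ (0:ℝ), HasDerivAt χ (χ' s) s)
    (hcont : ContinuousOn χ' (Set.Ici (0:ℝ)))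
    (hmono : ∀ s ≥ (0:ℝ), 0 ≤ χ' s)
    (hid : ∀ s : ℝ, 0 ≤ s → s ≤ 1/2 → χ s = s)
    (hone : ∀ s : ℝ, 2 ≤ s → χ s = 1)
    (hbound : ∀ s ≥ (0:ℝ), |χ' s| ≤ 1)
    (x : ℝ) (ξ : EuclideanSpace ℝ (Fin 3)) (hpos : 0 < alphaTilde u c ν₀ x ξ) :
    ∃ d : ℝ, HasDerivAt (fun y => χ (alphaTilde u c ν₀ y ξ)) d x ∧
      |(ξ 0 + u) * d| ≤ 2 * c * ν₀ * χ (alphaTilde u c ν₀ x ξ) := by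
  have hmonotone : MonotoneOn χ (Ici 0) :=
    monotoneOn_of_hasDerivAt_nonneg (convex_Ici 0) hderiv hmono
  simpa [abs_of_pos, hc, hν₀, mul_assoc] using
    alpha_deriv_bound_general one_half_pos (by norm_num : (1 / 2 : ℝ) ≤ 2) hmonotone
      (fun s hs => hid s hs.1 hs.2) hone hpos (hderiv _ hpos.le) (le_of_abs_le (hbound _ hpos.le))
end
end

section
/- There exist constants C > 0 and ϱ > 0 (depending only on C₁, C₂) such that for all ξ, ξ' ∈ ℝ³ with ξ ≠ ξ', k₁(ξ,ξ') + k₂(ξ,ξ') ≤ C · e^{−ϱ|ξ−ξ'|²} / |ξ−ξ'|. -/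
noncomputable section

/-- The first Grad kernel `k₁(ξ,ξ') = C₁|ξ−ξ'| e^{−(|ξ|²+|ξ'|²)/4}`. -/
def gradK1 (C₁ : ℝ) (ξ ξ' : EuclideanSpace ℝ (Fin 3)) : ℝ :=
  C₁ * ‖ξ - ξ'‖ * Real.exp (-(‖ξ‖ ^ 2 + ‖ξ'‖ ^ 2) / 4)

/-- The second Grad kernel
`k₂(ξ,ξ') = C₂|ξ−ξ'|⁻¹ e^{−|ξ−ξ'|²/8 − (|ξ|²−|ξ'|²)²/(8|ξ−ξ'|²)}`. -/
def gradK2 (C₂ : ℝ) (ξ ξ' : EuclideanSpace ℝ (Fin 3)) : ℝ :=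
  C₂ * ‖ξ - ξ'‖⁻¹ *
    Real.exp (-‖ξ - ξ'‖ ^ 2 / 8 - (‖ξ‖ ^ 2 - ‖ξ'‖ ^ 2) ^ 2 / (8 * ‖ξ - ξ'‖ ^ 2))

/-!
Both kernels decay like `exp (-|ξ - ξ'|² / 8)`: the first because
`|ξ - ξ'|² ≤ 2 (|ξ|² + |ξ'|²)`, the second after dropping the nonpositive term of its exponent.
The first lacks the singularity `|ξ - ξ'|⁻¹`, so comparing it with the right-hand side costs a
factor `|ξ - ξ'|²`, which is absorbed by lowering the rate from `1 / 8` to any `ϱ < 1 / 8`.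
-/

lemma mul_exp_neg_mul_le {c : ℝ} (hc : 0 < c) (t : ℝ) :
    t * Real.exp (-(c * t)) ≤ Real.exp (-1) / c := by
  rw [le_div_iff₀ hc]
  calc t * Real.exp (-(c * t)) * c = c * t * Real.exp (-(c * t)) := by ring
    _ ≤ Real.exp (-1) := Real.mul_exp_neg_le_exp_neg_one (c * t)

section NormBounds

variable {E : Type*} [SeminormedAddCommGroup E]

lemma norm_sub_sq_le_two_mul (x y : E) : ‖x - y‖ ^ 2 ≤ 2 * (‖x‖ ^ 2 + ‖y‖ ^ 2) :=
  calc ‖x - y‖ ^ 2 ≤ (‖x‖ + ‖y‖) ^ 2 := by gcongr; exact norm_sub_le x y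
    _ ≤ 2 * (‖x‖ ^ 2 + ‖y‖ ^ 2) := add_sq_le

lemma norm_sub_sq_mul_exp_neg_le {ϱ : ℝ} (hϱ : ϱ < 1 / 8) (x y : E) :
    ‖x - y‖ ^ 2 * Real.exp (-(‖x‖ ^ 2 + ‖y‖ ^ 2) / 4) ≤
      Real.exp (-1) / (1 / 8 - ϱ) * Real.exp (-ϱ * ‖x - y‖ ^ 2) := by
  have hexp : -(‖x‖ ^ 2 + ‖y‖ ^ 2) / 4 ≤
      -((1 / 8 - ϱ) * ‖x - y‖ ^ 2) + -ϱ * ‖x - y‖ ^ 2 := by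
    linarith [norm_sub_sq_le_two_mul x y]
  calc ‖x - y‖ ^ 2 * Real.exp (-(‖x‖ ^ 2 + ‖y‖ ^ 2) / 4)
      ≤ ‖x - y‖ ^ 2 * Real.exp (-((1 / 8 - ϱ) * ‖x - y‖ ^ 2) + -ϱ * ‖x - y‖ ^ 2) := by
        gcongr
    _ = ‖x - y‖ ^ 2 * Real.exp (-((1 / 8 - ϱ) * ‖x - y‖ ^ 2)) *
          Real.exp (-ϱ * ‖x - y‖ ^ 2) := by
        rw [Real.exp_add, mul_assoc]
    _ ≤ Real.exp (-1) / (1 / 8 - ϱ) * Real.exp (-ϱ * ‖x - y‖ ^ 2) := by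
        gcongr
        exact mul_exp_neg_mul_le (sub_pos.mpr hϱ) _

end NormBounds

lemma exp_neg_sq_div_eight_sub_le {ϱ : ℝ} (hϱ : ϱ ≤ 1 / 8) (d s : ℝ) :
    Real.exp (-d ^ 2 / 8 - s ^ 2 / (8 * d ^ 2)) ≤ Real.exp (-ϱ * d ^ 2) := by
  have hs : 0 ≤ s ^ 2 / (8 * d ^ 2) := by positivity
  have hd : ϱ * d ^ 2 ≤ 1 / 8 * d ^ 2 := by gcongr
  gcongr
  linarith

theorem grad_kernel_bound_general {E : Type*} [NormedAddCommGroup E] {C₁ C₂ ϱ : ℝ}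
    (hC₁ : 0 ≤ C₁) (hC₂ : 0 ≤ C₂) (hϱ : ϱ < 1 / 8) {ξ ξ' : E} (hne : ξ ≠ ξ') :
    C₁ * ‖ξ - ξ'‖ * Real.exp (-(‖ξ‖ ^ 2 + ‖ξ'‖ ^ 2) / 4) +
        C₂ * ‖ξ - ξ'‖⁻¹ *
          Real.exp (-‖ξ - ξ'‖ ^ 2 / 8 - (‖ξ‖ ^ 2 - ‖ξ'‖ ^ 2) ^ 2 / (8 * ‖ξ - ξ'‖ ^ 2)) ≤
      (C₁ * (Real.exp (-1) / (1 / 8 - ϱ)) + C₂) * Real.exp (-ϱ * ‖ξ - ξ'‖ ^ 2) / ‖ξ - ξ'‖ := by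
  have hd : ‖ξ - ξ'‖ ≠ 0 := norm_ne_zero_iff.mpr (sub_ne_zero.mpr hne)
  calc
    _ = (C₁ * (‖ξ - ξ'‖ ^ 2 * Real.exp (-(‖ξ‖ ^ 2 + ‖ξ'‖ ^ 2) / 4)) +
          C₂ * Real.exp (-‖ξ - ξ'‖ ^ 2 / 8 -
            (‖ξ‖ ^ 2 - ‖ξ'‖ ^ 2) ^ 2 / (8 * ‖ξ - ξ'‖ ^ 2))) / ‖ξ - ξ'‖ := by
        rw [eq_div_iff hd, add_mul, mul_right_comm (C₂ * _), inv_mul_cancel_right₀ hd]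
        ring
    _ ≤ (C₁ * (Real.exp (-1) / (1 / 8 - ϱ) * Real.exp (-ϱ * ‖ξ - ξ'‖ ^ 2)) +
          C₂ * Real.exp (-ϱ * ‖ξ - ξ'‖ ^ 2)) / ‖ξ - ξ'‖ := by
        gcongr (C₁ * ?_ + C₂ * ?_) / _
        · exact norm_sub_sq_mul_exp_neg_le hϱ ξ ξ'
        · exact exp_neg_sq_div_eight_sub_le hϱ.le _ _
    _ = _ := by ring

/-- the Grad kernel `k = k₁ + k₂` satisfies
`k(ξ,ξ') ≤ C e^{−ϱ|ξ−ξ'|²}/|ξ−ξ'|` for some `C, ϱ > 0`. -/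
theorem grad_kernel_bound (C₁ C₂ : ℝ) (hC₁ : 0 < C₁) (hC₂ : 0 < C₂) :
    ∃ C > (0:ℝ), ∃ ϱ > (0:ℝ), ∀ ξ ξ' : EuclideanSpace ℝ (Fin 3), ξ ≠ ξ' →
      gradK1 C₁ ξ ξ' + gradK2 C₂ ξ ξ' ≤
        C * Real.exp (-ϱ * ‖ξ - ξ'‖ ^ 2) / ‖ξ - ξ'‖ := by
  exact ⟨C₁ * (Real.exp (-1) / (1 / 8 - 1 / 16)) + C₂, by norm_num1; positivity, 1 / 16,
    by norm_num, fun _ _ ↦ grad_kernel_bound_general hC₁.le hC₂.le (by norm_num)⟩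
end
end

section
/- For each θ with 0 ≤ θ < 1/4 there exists a constant C > 0 (depending on θ, C₁, C₂) such that for all ξ ∈ ℝ³, ∫_{ℝ³} (k₁(ξ,ξ') + k₂(ξ,ξ')) · e^{θ|ξ|² − θ|ξ'|²} dξ' ≤ C / (1 + |ξ|). -/
open MeasureTheory

noncomputable section

/-!
Put `a = |ξ - ξ'|` and `b = (|ξ'|² - |ξ|²) / a`. The exponent of the weighted kernel `k₂` is the
quadratic form `-a²/8 - b²/8 - θab`, which is negative definite exactly when `|θ| < 1/4`, so `k₂` is
dominated by `a⁻¹ exp (-c (a² + b²))` for some `c > 0`. With `w = ξ' - ξ`, `r = |w|` and `x` the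
component of `w` along `ξ`, one has `b = r + 2|ξ|x/r`, and in a space of dimension `d ≥ 3` the law
of `(x, r)` has density at most a multiple of `r ^ (d - 2)` on `|x| < r`. For fixed `r` the integral
over `x` is therefore that of a Gaussian of width `r / |ξ|`, which yields the factor `(1 + |ξ|)⁻¹`.
For `k₁` the weight leaves a Gaussian in both variables, which absorbs any polynomial.
-/

open Module Metric Set Real
open scoped ENNReal

section Radial

variable {F : Type*} [NormedAddCommGroup F] [NormedSpace ℝ F] [FiniteDimensional ℝ F]
  [MeasurableSpace F] [BorelSpace F] (μ : Measure F) [μ.IsAddHaarMeasure]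

lemma lintegral_comp_norm_addHaar [Nontrivial F] {f : ℝ → ℝ≥0∞} (hf : Measurable f) :
    ∫⁻ y, f ‖y‖ ∂μ = finrank ℝ F * μ (ball 0 1) *
      ∫⁻ ρ in Ioi 0, ENNReal.ofReal (ρ ^ (finrank ℝ F - 1)) * f ρ := by
  have hfst : Measurable fun ρ : Ioi (0 : ℝ) => f ρ := hf.comp measurable_subtype_coe
  calc ∫⁻ y, f ‖y‖ ∂μ = ∫⁻ y : ({0}ᶜ : Set F), f ‖(y : F)‖ ∂μ.comap (↑) := by
        rw [lintegral_subtype_comap (measurableSet_singleton _).compl fun y => f ‖y‖,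
          restrict_compl_singleton]
    _ = ∫⁻ z, f z.2 ∂μ.toSphere.prod (.volumeIoiPow (finrank ℝ F - 1)) := by
        simpa using μ.measurePreserving_homeomorphUnitSphereProd.lintegral_comp_emb
          (Homeomorph.measurableEmbedding _) (fun z => f z.2)
    _ = μ.toSphere univ * ∫⁻ ρ : Ioi (0 : ℝ), f ρ ∂.volumeIoiPow (finrank ℝ F - 1) := by
        rw [lintegral_prod _ (by fun_prop)]
        simp only [lintegral_const, mul_comm]
    _ = _ := by
        rw [μ.toSphere_apply_univ, Measure.volumeIoiPow,
          lintegral_withDensity_eq_lintegral_mul _ (by fun_prop) hfst]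
        congr 1
        exact lintegral_subtype_comap measurableSet_Ioi
          fun ρ => ENNReal.ofReal (ρ ^ (finrank ℝ F - 1)) * f ρ

lemma hasDerivAt_sqrt_sq_add_sq (a : ℝ) {ρ : ℝ} (hρ : 0 < ρ) :
    HasDerivAt (fun ρ => √(a ^ 2 + ρ ^ 2)) (ρ / √(a ^ 2 + ρ ^ 2)) ρ := by
  have hderiv := ((hasDerivAt_pow 2 ρ).const_add (a ^ 2)).sqrt (by positivity)
  refine hderiv.congr_deriv ?_
  simp only [Nat.cast_ofNat, Nat.add_one_sub_one, pow_one]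
  exact mul_div_mul_left _ _ two_ne_zero

lemma image_sqrt_sq_add_sq_Ioi_subset (a : ℝ) :
    (fun ρ => √(a ^ 2 + ρ ^ 2)) '' Ioi 0 ⊆ Ioi |a| := by
  rintro _ ⟨ρ, hρ : 0 < ρ, rfl⟩
  refine lt_sqrt_of_sq_lt ?_
  rw [sq_abs]
  exact lt_add_of_pos_right _ (by positivity)

lemma setLIntegral_comp_sqrt_sq_add_sq_le (g : ℝ → ℝ≥0∞) (a : ℝ) :
    ∫⁻ ρ in Ioi 0, ENNReal.ofReal ρ * g √(a ^ 2 + ρ ^ 2)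
      ≤ ∫⁻ r in Ioi |a|, ENNReal.ofReal r * g r := by
  have hmono : MonotoneOn (fun ρ => √(a ^ 2 + ρ ^ 2)) (Ioi 0) := by
    intro ρ (hρ : 0 < ρ) ρ' _ hle
    exact sqrt_le_sqrt (by gcongr)
  calc ∫⁻ ρ in Ioi 0, ENNReal.ofReal ρ * g √(a ^ 2 + ρ ^ 2)
      = ∫⁻ ρ in Ioi 0, ENNReal.ofReal (ρ / √(a ^ 2 + ρ ^ 2)) *
          (ENNReal.ofReal √(a ^ 2 + ρ ^ 2) * g √(a ^ 2 + ρ ^ 2)) := by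
        refine setLIntegral_congr_fun measurableSet_Ioi fun ρ (hρ : 0 < ρ) => ?_
        have hr : 0 < √(a ^ 2 + ρ ^ 2) := by positivity
        rw [← mul_assoc, ← ENNReal.ofReal_mul (by positivity), div_mul_cancel₀ _ hr.ne']
    _ = ∫⁻ r in (fun ρ => √(a ^ 2 + ρ ^ 2)) '' Ioi 0, ENNReal.ofReal r * g r :=
        (lintegral_image_eq_lintegral_deriv_mul_of_monotoneOn measurableSet_Ioi
          (fun ρ hρ => (hasDerivAt_sqrt_sq_add_sq a hρ).hasDerivWithinAt) hmono
          fun r => ENNReal.ofReal r * g r).symm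
    _ ≤ ∫⁻ r in Ioi |a|, ENNReal.ofReal r * g r :=
        lintegral_mono_set (image_sqrt_sq_add_sq_Ioi_subset a)

lemma lintegral_comp_sqrt_sq_add_norm_sq_le (hF : 2 ≤ finrank ℝ F) {g : ℝ → ℝ≥0∞}
    (hg : Measurable g) (a : ℝ) :
    ∫⁻ y, g √(a ^ 2 + ‖y‖ ^ 2) ∂μ ≤ finrank ℝ F * μ (ball 0 1) *
      ∫⁻ r in Ioi |a|, ENNReal.ofReal (r ^ (finrank ℝ F - 1)) * g r := by
  have : Nontrivial F := nontrivial_of_finrank_pos (R := ℝ) (by lia)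
  obtain ⟨m, hm⟩ : ∃ m, finrank ℝ F - 1 = m + 1 := ⟨finrank ℝ F - 2, by lia⟩
  rw [lintegral_comp_norm_addHaar μ (f := fun ρ => g √(a ^ 2 + ρ ^ 2))
    (hg.comp (by fun_prop)), hm]
  gcongr _ * ?_
  calc ∫⁻ ρ in Ioi 0, ENNReal.ofReal (ρ ^ (m + 1)) * g √(a ^ 2 + ρ ^ 2)
      ≤ ∫⁻ ρ in Ioi 0, ENNReal.ofReal ρ *
          (ENNReal.ofReal (√(a ^ 2 + ρ ^ 2) ^ m) * g √(a ^ 2 + ρ ^ 2)) := by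
        refine setLIntegral_mono' measurableSet_Ioi fun ρ (hρ : 0 < ρ) => ?_
        rw [← mul_assoc, ← ENNReal.ofReal_mul hρ.le, pow_succ']
        gcongr
        exact le_sqrt_of_sq_le (le_add_of_nonneg_left (sq_nonneg a))
    _ ≤ ∫⁻ r in Ioi |a|, ENNReal.ofReal r * (ENNReal.ofReal (r ^ m) * g r) :=
        setLIntegral_comp_sqrt_sq_add_sq_le (fun r => ENNReal.ofReal (r ^ m) * g r) a
    _ = ∫⁻ r in Ioi |a|, ENNReal.ofReal (r ^ (m + 1)) * g r := by
        refine setLIntegral_congr_fun measurableSet_Ioi fun r (hr : |a| < r) => ?_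
        rw [← mul_assoc, ← ENNReal.ofReal_mul ((abs_nonneg a).trans hr.le), pow_succ']

lemma lintegral_setLIntegral_Ioi_abs_swap {H : ℝ → ℝ → ℝ≥0∞}
    (hH : Measurable (Function.uncurry H)) :
    ∫⁻ x, ∫⁻ r in Ioi |x|, H x r = ∫⁻ r in Ioi 0, ∫⁻ x in Ioo (-r) r, H x r := by
  let S : Set (ℝ × ℝ) := {q | |q.1| < q.2}
  have hS : MeasurableSet S := measurableSet_lt (by fun_prop) (by fun_prop)
  have hslice (r : ℝ) : ∫⁻ x, S.indicator (Function.uncurry H) (x, r) =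
      ∫⁻ x in Ioo (-r) r, H x r := by
    rw [← lintegral_indicator measurableSet_Ioo]
    simp only [S, indicator_apply, mem_ofPred_eq, mem_Ioo, abs_lt, Function.uncurry_apply_pair]
  calc ∫⁻ x, ∫⁻ r in Ioi |x|, H x r
      = ∫⁻ x, ∫⁻ r, S.indicator (Function.uncurry H) (x, r) := by
        simp_rw [← lintegral_indicator measurableSet_Ioi]
        rfl
    _ = ∫⁻ r, ∫⁻ x, S.indicator (Function.uncurry H) (x, r) :=
        lintegral_lintegral_swap (hH.indicator hS).aemeasurable
    _ = ∫⁻ r in Ioi 0, ∫⁻ x in Ioo (-r) r, H x r := by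
        simp_rw [hslice]
        refine (setLIntegral_eq_of_support_subset fun r hr => ?_).symm
        by_contra hr₀
        have hempty : Ioo (-r) r = ∅ := Ioo_eq_empty_of_le (by linarith [notMem_Ioi.1 hr₀])
        exact hr (by simp only [hempty, setLIntegral_empty])

lemma lintegral_prod_comp_sqrt_sq_add_norm_sq_le (hF : 2 ≤ finrank ℝ F) {G : ℝ → ℝ → ℝ≥0∞}
    (hG : Measurable (Function.uncurry G)) :
    ∫⁻ p : ℝ × F, G p.1 √(p.1 ^ 2 + ‖p.2‖ ^ 2) ∂volume.prod μ ≤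
      finrank ℝ F * μ (ball 0 1) * ∫⁻ r in Ioi 0, ∫⁻ x in Ioo (-r) r,
        ENNReal.ofReal (r ^ (finrank ℝ F - 1)) * G x r := by
  have hfinite : finrank ℝ F * μ (ball 0 1) ≠ ∞ :=
    ENNReal.mul_ne_top (ENNReal.natCast_ne_top _) measure_ball_lt_top.ne
  calc ∫⁻ p : ℝ × F, G p.1 √(p.1 ^ 2 + ‖p.2‖ ^ 2) ∂volume.prod μ
      ≤ ∫⁻ x, ∫⁻ y, G x √(x ^ 2 + ‖y‖ ^ 2) ∂μ := lintegral_prod_le _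
    _ ≤ ∫⁻ x, finrank ℝ F * μ (ball 0 1) *
          ∫⁻ r in Ioi |x|, ENNReal.ofReal (r ^ (finrank ℝ F - 1)) * G x r :=
        lintegral_mono fun x => lintegral_comp_sqrt_sq_add_norm_sq_le μ hF hG.of_uncurry_left x
    _ = _ := by
        rw [lintegral_const_mul' _ _ hfinite, lintegral_setLIntegral_Ioi_abs_swap]
        exact (by fun_prop : Measurable fun q : ℝ × ℝ =>
          ENNReal.ofReal (q.2 ^ (finrank ℝ F - 1))).mul hG

end Radial

section Isometry

variable {E : Type*} [NormedAddCommGroup E] [InnerProductSpace ℝ E] [FiniteDimensional ℝ E]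
  {V : Type*} [NormedAddCommGroup V] [InnerProductSpace ℝ V] [FiniteDimensional ℝ V]

lemma exists_linearIsometryEquiv_apply_eq (h : finrank ℝ E = finrank ℝ V) {u : E} {v : V}
    (huv : ‖u‖ = ‖v‖) : ∃ e : E ≃ₗᵢ[ℝ] V, e u = v := by
  let e₀ : E ≃ₗᵢ[ℝ] V := (stdOrthonormalBasis ℝ E).equiv (stdOrthonormalBasis ℝ V) (finCongr h)
  exact ⟨e₀.trans (ℝ ∙ (e₀ u - v))ᗮ.reflection,
    Submodule.reflection_sub ((e₀.norm_map u).trans huv)⟩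

lemma lintegral_inner_norm_eq_lintegral_prod [MeasurableSpace E] [BorelSpace E]
    [MeasurableSpace V] [BorelSpace V] (h : finrank ℝ E = finrank ℝ V + 1)
    (G : ℝ → ℝ → ℝ≥0∞) (ξ : E) :
    ∫⁻ w, G (inner ℝ ξ w) ‖w‖ =
      ∫⁻ p : ℝ × V, G (‖ξ‖ * p.1) √(p.1 ^ 2 + ‖p.2‖ ^ 2) := by
  have hfinrank : finrank ℝ E = finrank ℝ (WithLp 2 (ℝ × V)) := by
    rw [(WithLp.linearEquiv 2 ℝ (ℝ × V)).finrank_eq, finrank_prod, finrank_self, h, add_comm]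
  obtain ⟨e, he⟩ := exists_linearIsometryEquiv_apply_eq hfinrank
    (u := ξ) (v := WithLp.toLp 2 (‖ξ‖, 0)) (by simp)
  have hinner (w : E) : inner ℝ ξ w = ‖ξ‖ * (e w).fst := by
    rw [← e.inner_map_map, he]
    simp [mul_comm]
  have hnorm (w : E) : ‖w‖ = √((e w).fst ^ 2 + ‖(e w).snd‖ ^ 2) := by
    rw [← e.norm_map, WithLp.prod_norm_eq_of_L2, norm_eq_abs, sq_abs]
  simp_rw [hinner]
  rw [lintegral_congr fun w => congrArg (G _) (hnorm w)]
  exact (e.measurePreserving.trans (WithLp.volume_preserving_ofLp ℝ V)).lintegral_comp_emb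
    (e.toMeasurableEquiv.trans (MeasurableEquiv.toLp 2 (ℝ × V)).symm).measurableEmbedding
    fun p => G (‖ξ‖ * p.1) √(p.1 ^ 2 + ‖p.2‖ ^ 2)

end Isometry

section Gaussian

lemma ofReal_mul_lintegral_exp_neg_mul_sq_affine_le {c : ℝ} (hc : 0 < c) (a b : ℝ) :
    ENNReal.ofReal b * ∫⁻ x, ENNReal.ofReal (exp (-c * (a + b * x) ^ 2)) ≤
      ENNReal.ofReal √(π / c) := by
  rcases le_or_gt b 0 with hb | hb
  · simp [ENNReal.ofReal_of_nonpos hb]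
  have hint : Integrable fun x => exp (-c * (a + b * x) ^ 2) :=
    ((integrable_exp_neg_mul_sq hc).comp_add_left a).comp_mul_left' hb.ne'
  rw [← ofReal_integral_eq_lintegral_ofReal hint (ae_of_all _ fun x => (exp_pos _).le),
    ← ENNReal.ofReal_mul hb.le, Measure.integral_comp_mul_left fun y => exp (-c * (a + y) ^ 2),
    integral_add_left_eq_self fun y => exp (-c * y ^ 2), integral_gaussian,
    abs_of_pos (inv_pos.2 hb), smul_eq_mul, mul_inv_cancel_left₀ hb.ne']

lemma setLIntegral_exp_neg_mul_sq_affine_le {c L r : ℝ} (hc : 0 < c) (hL : 0 ≤ L) (hr : 0 < r) :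
    ∫⁻ x in Ioo (-r) r, ENNReal.ofReal (exp (-c * (r + 2 * L / r * x) ^ 2)) ≤
      ENNReal.ofReal ((2 + √(π / c)) * r) / ENNReal.ofReal (1 + L) := by
  set I := ∫⁻ x in Ioo (-r) r, ENNReal.ofReal (exp (-c * (r + 2 * L / r * x) ^ 2))
  have hvolume : I ≤ ENNReal.ofReal (2 * r) := by
    calc I ≤ ∫⁻ _ in Ioo (-r) r, 1 := by
          refine lintegral_mono fun x => ENNReal.ofReal_le_one.2 (exp_le_one_iff.2 ?_)
          rw [neg_mul]
          exact neg_nonpos.2 (by positivity)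
      _ = ENNReal.ofReal (2 * r) := by
          rw [setLIntegral_one, volume_Ioo, sub_neg_eq_add, two_mul]
  have hgaussian : ENNReal.ofReal L * I ≤ ENNReal.ofReal (r * √(π / c)) := by
    calc ENNReal.ofReal L * I
        = ENNReal.ofReal (r / 2) * (ENNReal.ofReal (2 * L / r) * I) := by
          rw [← mul_assoc, ← ENNReal.ofReal_mul (by positivity)]
          congr 2
          field_simp
      _ ≤ ENNReal.ofReal r * ENNReal.ofReal √(π / c) := by
          gcongr
          · linarith
          · exact (mul_le_mul_right (setLIntegral_le_lintegral _ _) _).trans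
              (ofReal_mul_lintegral_exp_neg_mul_sq_affine_le hc _ _)
      _ = ENNReal.ofReal (r * √(π / c)) := (ENNReal.ofReal_mul hr.le).symm
  have hpos : 0 < 1 + L := by positivity
  rw [ENNReal.le_div_iff_mul_le (.inl (ENNReal.ofReal_pos.2 hpos).ne')
    (.inl ENNReal.ofReal_ne_top), mul_comm,
    ENNReal.ofReal_add zero_le_one hL, add_mul, ENNReal.ofReal_one, one_mul]
  calc I + ENNReal.ofReal L * I ≤ ENNReal.ofReal (2 * r) + ENNReal.ofReal (r * √(π / c)) :=
        add_le_add hvolume hgaussian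
    _ = ENNReal.ofReal ((2 + √(π / c)) * r) := by
        rw [← ENNReal.ofReal_add (by positivity) (by positivity)]
        ring_nf

lemma one_add_sq_mul_exp_neg_mul_sq_le {δ : ℝ} (hδ : 0 < δ) (t : ℝ) :
    (1 + t) ^ 2 * exp (-(δ * t ^ 2)) ≤ 2 + 2 / δ := by
  rw [exp_neg, ← div_eq_mul_inv, div_le_iff₀ (exp_pos _)]
  calc (1 + t) ^ 2 ≤ 2 + 2 * t ^ 2 := by linarith [sq_nonneg (1 - t)]
    _ ≤ 2 * (δ * t ^ 2 + 1) + 2 / δ + 2 * t ^ 2 := by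
        have : 0 ≤ δ * t ^ 2 := by positivity
        have : 0 < 2 / δ := by positivity
        linarith
    _ = (2 + 2 / δ) * (δ * t ^ 2 + 1) := by field_simp; ring
    _ ≤ (2 + 2 / δ) * exp (δ * t ^ 2) := by gcongr; exact add_one_le_exp _

lemma integrable_exp_neg_mul_norm_sq {E : Type*} [NormedAddCommGroup E] [InnerProductSpace ℝ E]
    [FiniteDimensional ℝ E] [MeasurableSpace E] [BorelSpace E] {b : ℝ} (hb : 0 < b) :
    Integrable fun v : E => exp (-b * ‖v‖ ^ 2) := by
  refine .of_integral_ne_zero ?_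
  rw [GaussianFourier.integral_rexp_neg_mul_sq_norm hb]
  positivity

end Gaussian

section Decay

variable {E : Type*} [NormedAddCommGroup E] [MeasureSpace E]

/-- A kernel `k` on `E` gains one power of decay: its rows `k ξ` are integrable, with
`∫ |k(ξ,ξ')| dξ' = O((1 + |ξ|)⁻¹)` uniformly in `ξ`. -/
def RowIntegralDecay (k : E → E → ℝ) : Prop :=
  ∃ C > 0, ∀ ξ, Integrable (k ξ) ∧ ∫ ξ', ‖k ξ ξ'‖ ≤ C / (1 + ‖ξ‖)

namespace RowIntegralDecay

variable {k l : E → E → ℝ}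

lemma add (hk : RowIntegralDecay k) (hl : RowIntegralDecay l) : RowIntegralDecay (k + l) := by
  obtain ⟨C, hC, hk⟩ := hk
  obtain ⟨D, hD, hl⟩ := hl
  refine ⟨C + D, by positivity, fun ξ => ⟨(hk ξ).1.add (hl ξ).1, ?_⟩⟩
  calc ∫ ξ', ‖k ξ ξ' + l ξ ξ'‖ ≤ ∫ ξ', (‖k ξ ξ'‖ + ‖l ξ ξ'‖) :=
        integral_mono ((hk ξ).1.add (hl ξ).1).norm ((hk ξ).1.norm.add (hl ξ).1.norm)
          fun ξ' => norm_add_le _ _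
    _ = (∫ ξ', ‖k ξ ξ'‖) + ∫ ξ', ‖l ξ ξ'‖ := integral_add (hk ξ).1.norm (hl ξ).1.norm
    _ ≤ (C + D) / (1 + ‖ξ‖) := by
        rw [add_div]
        exact add_le_add (hk ξ).2 (hl ξ).2

lemma mono (hl : RowIntegralDecay l) (hk : ∀ ξ, AEStronglyMeasurable (k ξ)) (A : ℝ)
    (hkl : ∀ ξ ξ', ‖k ξ ξ'‖ ≤ A * ‖l ξ ξ'‖) : RowIntegralDecay k := by
  obtain ⟨C, hC, hl⟩ := hl
  have hint (ξ : E) : Integrable (k ξ) :=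
    ((hl ξ).1.norm.const_mul A).mono' (hk ξ) (ae_of_all _ (hkl ξ))
  refine ⟨(|A| + 1) * C, by positivity, fun ξ => ⟨hint ξ, ?_⟩⟩
  calc ∫ ξ', ‖k ξ ξ'‖ ≤ ∫ ξ', A * ‖l ξ ξ'‖ :=
        integral_mono (hint ξ).norm ((hl ξ).1.norm.const_mul A) (hkl ξ)
    _ = A * ∫ ξ', ‖l ξ ξ'‖ := integral_const_mul _ _
    _ ≤ (|A| + 1) * (C / (1 + ‖ξ‖)) :=
        mul_le_mul ((le_abs_self A).trans (le_add_of_nonneg_right zero_le_one)) (hl ξ).2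
          (by positivity) (by positivity)
    _ = (|A| + 1) * C / (1 + ‖ξ‖) := by ring

lemma of_lintegral_enorm_le (hk : ∀ ξ, AEStronglyMeasurable (k ξ)) {C : ℝ≥0∞} (hC : C ≠ ∞)
    (hle : ∀ ξ, ∫⁻ ξ', ‖k ξ ξ'‖ₑ ≤ C / ENNReal.ofReal (1 + ‖ξ‖)) : RowIntegralDecay k := by
  refine ⟨C.toReal + 1, by positivity, fun ξ => ?_⟩
  have hpos : 0 < 1 + ‖ξ‖ := by positivity
  have htop : C / ENNReal.ofReal (1 + ‖ξ‖) ≠ ∞ :=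
    ENNReal.div_ne_top hC (ENNReal.ofReal_pos.2 hpos).ne'
  refine ⟨⟨hk ξ, (hle ξ).trans_lt htop.lt_top⟩, ?_⟩
  calc ∫ ξ', ‖k ξ ξ'‖ = (∫⁻ ξ', ‖k ξ ξ'‖ₑ).toReal :=
        integral_norm_eq_lintegral_enorm (hk ξ)
    _ ≤ (C / ENNReal.ofReal (1 + ‖ξ‖)).toReal := ENNReal.toReal_mono htop (hle ξ)
    _ = C.toReal / (1 + ‖ξ‖) := by rw [ENNReal.toReal_div, ENNReal.toReal_ofReal hpos.le]
    _ ≤ (C.toReal + 1) / (1 + ‖ξ‖) := by gcongr; linarith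

end RowIntegralDecay

lemma rowIntegralDecay_div_one_add_norm {g : E → ℝ} (hg : Integrable g) :
    RowIntegralDecay fun ξ ξ' => g ξ' / (1 + ‖ξ‖) := by
  refine ⟨(∫ ξ', ‖g ξ'‖) + 1, by positivity, fun ξ => ⟨hg.div_const _, ?_⟩⟩
  have hpos : 0 < 1 + ‖ξ‖ := by positivity
  simp_rw [norm_div, norm_of_nonneg hpos.le]
  rw [integral_div]
  gcongr
  linarith

end Decay

section PointwiseBounds

variable {E : Type*} [NormedAddCommGroup E]

lemma norm_sub_mul_exp_mul_exp_le {θ δ : ℝ} (hδ : 0 < δ) (hθ : |θ| ≤ 1 / 4 - 2 * δ) (ξ ξ' : E) :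
    ‖ξ - ξ'‖ * exp (-(‖ξ‖ ^ 2 + ‖ξ'‖ ^ 2) / 4) * exp (θ * ‖ξ‖ ^ 2 - θ * ‖ξ'‖ ^ 2) ≤
      (2 + 2 / δ) ^ 2 * (exp (-δ * ‖ξ'‖ ^ 2) / (1 + ‖ξ‖)) := by
  have hexponent : -(‖ξ‖ ^ 2 + ‖ξ'‖ ^ 2) / 4 + (θ * ‖ξ‖ ^ 2 - θ * ‖ξ'‖ ^ 2) ≤
      -(δ * ‖ξ‖ ^ 2) + (-(δ * ‖ξ'‖ ^ 2) + -δ * ‖ξ'‖ ^ 2) := by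
    obtain ⟨hθ₁, hθ₂⟩ := abs_le.1 hθ
    nlinarith [sq_nonneg ‖ξ‖, sq_nonneg ‖ξ'‖]
  have hdist : ‖ξ - ξ'‖ ≤ (1 + ‖ξ‖) * (1 + ‖ξ'‖) ^ 2 := by
    calc ‖ξ - ξ'‖ ≤ ‖ξ‖ + ‖ξ'‖ := norm_sub_le _ _
      _ ≤ (1 + ‖ξ‖) * (1 + ‖ξ'‖) := by
          linarith [mul_nonneg (norm_nonneg ξ) (norm_nonneg ξ')]
      _ ≤ (1 + ‖ξ‖) * (1 + ‖ξ'‖) ^ 2 := by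
          gcongr
          exact le_self_pow₀ (le_add_of_nonneg_right (norm_nonneg ξ')) two_ne_zero
  calc ‖ξ - ξ'‖ * exp (-(‖ξ‖ ^ 2 + ‖ξ'‖ ^ 2) / 4) * exp (θ * ‖ξ‖ ^ 2 - θ * ‖ξ'‖ ^ 2)
      = ‖ξ - ξ'‖ * exp (-(‖ξ‖ ^ 2 + ‖ξ'‖ ^ 2) / 4 + (θ * ‖ξ‖ ^ 2 - θ * ‖ξ'‖ ^ 2)) := by
        rw [mul_assoc, ← exp_add]
    _ ≤ ((1 + ‖ξ‖) * (1 + ‖ξ'‖) ^ 2) *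
          exp (-(δ * ‖ξ‖ ^ 2) + (-(δ * ‖ξ'‖ ^ 2) + -δ * ‖ξ'‖ ^ 2)) := by gcongr
    _ = ((1 + ‖ξ‖) ^ 2 * exp (-(δ * ‖ξ‖ ^ 2))) * ((1 + ‖ξ'‖) ^ 2 * exp (-(δ * ‖ξ'‖ ^ 2))) *
          (exp (-δ * ‖ξ'‖ ^ 2) / (1 + ‖ξ‖)) := by
        rw [exp_add, exp_add]
        field_simp
    _ ≤ (2 + 2 / δ) * (2 + 2 / δ) * (exp (-δ * ‖ξ'‖ ^ 2) / (1 + ‖ξ‖)) := by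
        gcongr <;> exact one_add_sq_mul_exp_neg_mul_sq_le hδ _
    _ = (2 + 2 / δ) ^ 2 * (exp (-δ * ‖ξ'‖ ^ 2) / (1 + ‖ξ‖)) := by rw [← sq (2 + 2 / δ)]

/-- The kernel `|ξ−ξ'|⁻¹ exp(−c(a² + b²))` with `a = |ξ−ξ'|` and `b = (|ξ'|²−|ξ|²)/a`, which
dominates the weighted second Grad kernel for a suitable `c > 0`. -/
def gradMajorant (c : ℝ) (ξ ξ' : E) : ℝ :=
  ‖ξ - ξ'‖⁻¹ * exp (-c * (‖ξ - ξ'‖ ^ 2 + ((‖ξ'‖ ^ 2 - ‖ξ‖ ^ 2) / ‖ξ - ξ'‖) ^ 2))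

lemma gradMajorant_nonneg (c : ℝ) (ξ ξ' : E) : 0 ≤ gradMajorant c ξ ξ' := by
  unfold gradMajorant
  positivity

lemma measurable_gradMajorant [MeasurableSpace E] [BorelSpace E] (c : ℝ)
    (ξ : E) : Measurable (gradMajorant c ξ) := by
  unfold gradMajorant
  fun_prop

lemma neg_sq_div_eight_sub_mul_le (θ a b : ℝ) :
    -a ^ 2 / 8 - b ^ 2 / 8 - θ * (a * b) ≤ -((1 - 4 * |θ|) / 8) * (a ^ 2 + b ^ 2) := by
  have hsum : 2 * |a| * |b| ≤ |a| ^ 2 + |b| ^ 2 := two_mul_le_add_sq _ _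
  have hprod : -(θ * (a * b)) ≤ |θ| * (|a| * |b|) := by
    rw [← abs_mul, ← abs_mul]
    exact neg_le_abs _
  rw [sq_abs, sq_abs] at hsum
  nlinarith [abs_nonneg θ]

lemma norm_sub_inv_mul_exp_mul_exp_le (θ : ℝ) (ξ ξ' : E) :
    ‖ξ - ξ'‖⁻¹ *
        exp (-‖ξ - ξ'‖ ^ 2 / 8 - (‖ξ‖ ^ 2 - ‖ξ'‖ ^ 2) ^ 2 / (8 * ‖ξ - ξ'‖ ^ 2)) *
        exp (θ * ‖ξ‖ ^ 2 - θ * ‖ξ'‖ ^ 2) ≤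
      gradMajorant ((1 - 4 * |θ|) / 8) ξ ξ' := by
  rcases (norm_nonneg (ξ - ξ')).eq_or_lt' with ha | ha
  · simp [gradMajorant, ha]
  rw [gradMajorant, mul_assoc, ← exp_add]
  gcongr
  refine le_trans (le_of_eq ?_) (neg_sq_div_eight_sub_mul_le θ _ _)
  field_simp
  ring

/-- `gradMajorant` in terms of `s = ⟪ξ, w⟫` and `r = |w|`, where `w = ξ' - ξ`. -/
def gradMajorantProfile (c s r : ℝ) : ℝ :=
  r⁻¹ * exp (-c * (r ^ 2 + ((r ^ 2 + 2 * s) / r) ^ 2))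

lemma gradMajorant_self_add [InnerProductSpace ℝ E] (c : ℝ) (ξ w : E) :
    gradMajorant c ξ (ξ + w) = gradMajorantProfile c (inner ℝ ξ w) ‖w‖ := by
  rw [gradMajorant, gradMajorantProfile, sub_add_cancel_left, norm_neg, norm_add_sq_real]
  ring_nf

end PointwiseBounds

section GradKernels

lemma setLIntegral_gradMajorantProfile_le {c L r : ℝ} (hc : 0 < c) (hL : 0 ≤ L) (hr : 0 < r)
    (n : ℕ) :
    ∫⁻ x in Ioo (-r) r, ENNReal.ofReal (r ^ n) * ENNReal.ofReal (gradMajorantProfile c (L * x) r) ≤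
      ENNReal.ofReal ((2 + √(π / c)) * (r ^ n * exp (-c * r ^ 2))) / ENNReal.ofReal (1 + L) := by
  have hsplit (x : ℝ) :
      ENNReal.ofReal (r ^ n) * ENNReal.ofReal (gradMajorantProfile c (L * x) r) =
        ENNReal.ofReal (r ^ n * r⁻¹ * exp (-c * r ^ 2)) *
          ENNReal.ofReal (exp (-c * (r + 2 * L / r * x) ^ 2)) := by
    have hquotient : (r ^ 2 + 2 * (L * x)) / r = r + 2 * L / r * x := by field_simp
    rw [← ENNReal.ofReal_mul (by positivity), ← ENNReal.ofReal_mul (by positivity),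
      gradMajorantProfile, hquotient, mul_add, exp_add]
    ring_nf
  simp_rw [hsplit]
  rw [lintegral_const_mul' _ _ ENNReal.ofReal_ne_top]
  grw [setLIntegral_exp_neg_mul_sq_affine_le hc hL hr]
  rw [← mul_div_assoc, ← ENNReal.ofReal_mul (by positivity)]
  refine le_of_eq ?_
  congr 2
  field_simp

lemma setLIntegral_pow_mul_exp_neg_mul_sq_ne_top {c : ℝ} (hc : 0 < c) (A : ℝ) (n : ℕ) :
    ∫⁻ r in Ioi 0, ENNReal.ofReal (A * (r ^ n * exp (-c * r ^ 2))) ≠ ∞ := by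
  have hint : IntegrableOn (fun r : ℝ => r ^ n * exp (-c * r ^ 2)) (Ioi 0) := by
    simpa only [rpow_natCast] using integrableOn_rpow_mul_exp_neg_mul_sq hc
      (neg_one_lt_zero.trans_le (Nat.cast_nonneg n))
  exact (hint.const_mul A).lintegral_lt_top.ne

variable {E : Type*} [NormedAddCommGroup E] [InnerProductSpace ℝ E] [FiniteDimensional ℝ E]
  [MeasurableSpace E] [BorelSpace E]

lemma lintegral_enorm_gradMajorant_le {V : Type*} [NormedAddCommGroup V] [InnerProductSpace ℝ V]
    [FiniteDimensional ℝ V] [MeasurableSpace V] [BorelSpace V] (hV : 2 ≤ finrank ℝ V)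
    (hEV : finrank ℝ E = finrank ℝ V + 1) {c : ℝ} (hc : 0 < c) (ξ : E) :
    ∫⁻ ξ', ‖gradMajorant c ξ ξ'‖ₑ ≤ finrank ℝ V * volume (ball (0 : V) 1) *
      (∫⁻ r in Ioi 0,
        ENNReal.ofReal ((2 + √(π / c)) * (r ^ (finrank ℝ V - 1) * exp (-c * r ^ 2)))) /
      ENNReal.ofReal (1 + ‖ξ‖) := by
  have hG : Measurable (Function.uncurry fun x r =>
      ENNReal.ofReal (gradMajorantProfile c (‖ξ‖ * x) r)) := by
    simp only [gradMajorantProfile, Function.uncurry_def]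
    fun_prop
  calc ∫⁻ ξ', ‖gradMajorant c ξ ξ'‖ₑ
      = ∫⁻ w, ENNReal.ofReal (gradMajorantProfile c (inner ℝ ξ w) ‖w‖) := by
        simp_rw [enorm_of_nonneg (gradMajorant_nonneg c ξ _), ← gradMajorant_self_add]
        exact (lintegral_add_left_eq_self _ ξ).symm
    _ = ∫⁻ p : ℝ × V,
          ENNReal.ofReal (gradMajorantProfile c (‖ξ‖ * p.1) √(p.1 ^ 2 + ‖p.2‖ ^ 2)) :=
        lintegral_inner_norm_eq_lintegral_prod hEV
          (fun s r => ENNReal.ofReal (gradMajorantProfile c s r)) ξ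
    _ ≤ finrank ℝ V * volume (ball (0 : V) 1) * ∫⁻ r in Ioi 0, ∫⁻ x in Ioo (-r) r,
          ENNReal.ofReal (r ^ (finrank ℝ V - 1)) *
            ENNReal.ofReal (gradMajorantProfile c (‖ξ‖ * x) r) :=
        lintegral_prod_comp_sqrt_sq_add_norm_sq_le volume hV hG
    _ ≤ finrank ℝ V * volume (ball (0 : V) 1) * ∫⁻ r in Ioi 0,
          ENNReal.ofReal ((2 + √(π / c)) * (r ^ (finrank ℝ V - 1) * exp (-c * r ^ 2))) /
            ENNReal.ofReal (1 + ‖ξ‖) := by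
        gcongr _ * ?_
        exact setLIntegral_mono' measurableSet_Ioi fun r hr =>
          setLIntegral_gradMajorantProfile_le hc (norm_nonneg ξ) hr _
    _ = _ := by
        simp_rw [div_eq_mul_inv _ (ENNReal.ofReal (1 + ‖ξ‖))]
        rw [lintegral_mul_const _ (by fun_prop), mul_assoc _ _ (ENNReal.ofReal (1 + ‖ξ‖))⁻¹]

lemma rowIntegralDecay_gradMajorant (hE : 3 ≤ finrank ℝ E) {c : ℝ} (hc : 0 < c) :
    RowIntegralDecay (gradMajorant c : E → E → ℝ) := by
  have hV : finrank ℝ (EuclideanSpace ℝ (Fin (finrank ℝ E - 1))) = finrank ℝ E - 1 :=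
    finrank_euclideanSpace_fin
  refine .of_lintegral_enorm_le
    (fun ξ => (measurable_gradMajorant c ξ).aestronglyMeasurable) ?_
    (lintegral_enorm_gradMajorant_le (V := EuclideanSpace ℝ (Fin (finrank ℝ E - 1)))
      (by rw [hV]; lia) (by rw [hV]; lia) hc)
  exact ENNReal.mul_ne_top
    (ENNReal.mul_ne_top (ENNReal.natCast_ne_top _) measure_ball_lt_top.ne)
    (setLIntegral_pow_mul_exp_neg_mul_sq_ne_top hc _ _)

lemma rowIntegralDecay_weighted_gradK1 {θ : ℝ} (hθ : |θ| < 1 / 4) (C₁ : ℝ) :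
    RowIntegralDecay fun ξ ξ' : E => C₁ * ‖ξ - ξ'‖ * exp (-(‖ξ‖ ^ 2 + ‖ξ'‖ ^ 2) / 4) *
      exp (θ * ‖ξ‖ ^ 2 - θ * ‖ξ'‖ ^ 2) := by
  obtain ⟨δ, hδ, hθδ⟩ : ∃ δ > 0, |θ| ≤ 1 / 4 - 2 * δ :=
    ⟨(1 / 4 - |θ|) / 2, by linarith, by linarith⟩
  refine (rowIntegralDecay_div_one_add_norm (integrable_exp_neg_mul_norm_sq hδ)).mono
    (fun ξ => (by fun_prop : Measurable _).aestronglyMeasurable)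
    (|C₁| * (2 + 2 / δ) ^ 2) fun ξ ξ' => ?_
  have hpos : 0 < 1 + ‖ξ‖ := by positivity
  have hle := mul_le_mul_of_nonneg_left (norm_sub_mul_exp_mul_exp_le hδ hθδ ξ ξ') (abs_nonneg C₁)
  simpa only [norm_mul, norm_div, norm_eq_abs, abs_exp, abs_of_pos hpos, abs_norm, mul_assoc]
    using hle

lemma rowIntegralDecay_weighted_gradK2 (hE : 3 ≤ finrank ℝ E) {θ : ℝ} (hθ : |θ| < 1 / 4) (C₂ : ℝ) :
    RowIntegralDecay fun ξ ξ' : E => C₂ * ‖ξ - ξ'‖⁻¹ *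
      exp (-‖ξ - ξ'‖ ^ 2 / 8 - (‖ξ‖ ^ 2 - ‖ξ'‖ ^ 2) ^ 2 / (8 * ‖ξ - ξ'‖ ^ 2)) *
      exp (θ * ‖ξ‖ ^ 2 - θ * ‖ξ'‖ ^ 2) := by
  refine (rowIntegralDecay_gradMajorant hE (c := (1 - 4 * |θ|) / 8) (by linarith)).mono
    (fun ξ => (by fun_prop : Measurable _).aestronglyMeasurable) |C₂| fun ξ ξ' => ?_
  have hle := mul_le_mul_of_nonneg_left
    ((norm_sub_inv_mul_exp_mul_exp_le θ ξ ξ').trans (le_norm_self _)) (abs_nonneg C₂)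
  simpa only [norm_mul, norm_inv, norm_eq_abs, abs_exp, abs_norm, mul_assoc] using hle

theorem grad_kernel_integral_bound_general (hE : 3 ≤ finrank ℝ E) {θ : ℝ} (hθ : |θ| < 1 / 4)
    (C₁ C₂ : ℝ) :
    RowIntegralDecay fun ξ ξ' : E =>
      (C₁ * ‖ξ - ξ'‖ * exp (-(‖ξ‖ ^ 2 + ‖ξ'‖ ^ 2) / 4) +
        C₂ * ‖ξ - ξ'‖⁻¹ *
          exp (-‖ξ - ξ'‖ ^ 2 / 8 - (‖ξ‖ ^ 2 - ‖ξ'‖ ^ 2) ^ 2 / (8 * ‖ξ - ξ'‖ ^ 2))) *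
        exp (θ * ‖ξ‖ ^ 2 - θ * ‖ξ'‖ ^ 2) := by
  simp_rw [add_mul]
  exact (rowIntegralDecay_weighted_gradK1 hθ C₁).add (rowIntegralDecay_weighted_gradK2 hE hθ C₂)

end GradKernels

/-- for `0 ≤ θ < 1/4`,
`∫ (k₁(ξ,ξ')+k₂(ξ,ξ')) e^{θ|ξ|²−θ|ξ'|²} dξ' ≤ C/(1+|ξ|)`. -/
theorem grad_kernel_integral_bound (θ C₁ C₂ : ℝ)
    (hθ₀ : 0 ≤ θ) (hθ : θ < 1/4) (hC₁ : 0 < C₁) (hC₂ : 0 < C₂) :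
    ∃ C > (0:ℝ), ∀ ξ : EuclideanSpace ℝ (Fin 3),
      (∫ ξ' : EuclideanSpace ℝ (Fin 3),
          (gradK1 C₁ ξ ξ' + gradK2 C₂ ξ ξ') *
            Real.exp (θ * ‖ξ‖ ^ 2 - θ * ‖ξ'‖ ^ 2)) ≤ C / (1 + ‖ξ‖) := by
  obtain ⟨C, hC, hbound⟩ := grad_kernel_integral_bound_general
    (E := EuclideanSpace ℝ (Fin 3)) (by simp) (by rwa [abs_of_nonneg hθ₀]) C₁ C₂
  exact ⟨C, hC, fun ξ => (le_norm_self _).trans <|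
    (norm_integral_le_integral_norm _).trans (hbound ξ).2⟩
end
end

section
/- For each θ with 0 ≤ θ < 1/4 there exist constants C > 0 and ϱ > 0 (depending on θ, C₁, C₂) such that for all ξ ≠ ξ' in ℝ³, (k₁(ξ,ξ') + k₂(ξ,ξ')) · e^{θ|ξ|² − θ|ξ'|²} ≤ C · e^{−ϱ|ξ−ξ'|²} / |ξ−ξ'|. -/
noncomputable section

/-!
The `k₁` exponent is controlled by `|ξ - ξ'|² ≤ 2(|ξ|² + |ξ'|²)`; the factor `|ξ - ξ'|²` that
appears when `1 / |ξ - ξ'|` is pulled out costs half of the resulting Gaussian. In the `k₂`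
exponent, Young's inequality absorbs the weight `θ(|ξ|² - |ξ'|²)` into the quotient term at the
price of `2θ²|ξ - ξ'|²`, which is less than `|ξ - ξ'|² / 8` because `|θ| < 1/4`.
-/

theorem mul_exp_neg_add_mul_le (b : ℝ) {c : ℝ} (hc : 0 < c) (t : ℝ) :
    t * Real.exp (-(b + c) * t) ≤ Real.exp (-1) / c * Real.exp (-b * t) := by
  have hexp : Real.exp (-(b + c) * t) = Real.exp (-(c * t)) * Real.exp (-b * t) := by
    rw [← Real.exp_add]
    ring_nf
  have hmax : t * Real.exp (-(c * t)) ≤ Real.exp (-1) / c := by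
    rw [le_div_iff₀ hc]
    linarith [Real.mul_exp_neg_le_exp_neg_one (c * t)]
  calc t * Real.exp (-(b + c) * t)
      = t * Real.exp (-(c * t)) * Real.exp (-b * t) := by rw [hexp, mul_assoc]
    _ ≤ Real.exp (-1) / c * Real.exp (-b * t) := by gcongr

section LinearOrderedField

variable {K : Type*} [Field K] [LinearOrder K] [IsStrictOrderedRing K]

theorem mul_le_sq_div_add_mul_sq (θ s : K) {d : K} (hd : d ≠ 0) :
    θ * s ≤ s ^ 2 / (8 * d ^ 2) + 2 * θ ^ 2 * d ^ 2 := by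
  have hε : 0 < 2 * d ^ 2 := by positivity
  calc θ * s = 2 * θ * (s / 2) := by ring
    _ ≤ 2 * d ^ 2 * θ ^ 2 + (2 * d ^ 2)⁻¹ * (s / 2) ^ 2 := two_mul_le_add_mul_sq hε
    _ = s ^ 2 / (8 * d ^ 2) + 2 * θ ^ 2 * d ^ 2 := by
      field_simp
      ring

theorem quarter_sub_abs_div_four_le {θ : K} (hθ : |θ| ≤ 1 / 4) :
    (1 / 4 - |θ|) / 4 ≤ 1 / 8 - 2 * θ ^ 2 := by
  rw [← sq_abs θ]
  nlinarith [abs_nonneg θ]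

end LinearOrderedField

section SeminormedAddGroup

variable {E : Type*} [SeminormedAddGroup E]

theorem norm_sub_sq_le_two_mul_add_sq (ξ ξ' : E) :
    ‖ξ - ξ'‖ ^ 2 ≤ 2 * (‖ξ‖ ^ 2 + ‖ξ'‖ ^ 2) :=
  calc ‖ξ - ξ'‖ ^ 2 ≤ (‖ξ‖ + ‖ξ'‖) ^ 2 := by gcongr; exact norm_sub_le ξ ξ'
    _ ≤ 2 * (‖ξ‖ ^ 2 + ‖ξ'‖ ^ 2) := add_sq_le

theorem exp_neg_norm_sq_add_mul_exp_weight_le {θ : ℝ} (hθ : |θ| ≤ 1 / 4) (ξ ξ' : E) :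
    Real.exp (-(‖ξ‖ ^ 2 + ‖ξ'‖ ^ 2) / 4) * Real.exp (θ * ‖ξ‖ ^ 2 - θ * ‖ξ'‖ ^ 2) ≤
      Real.exp (-((1 / 4 - |θ|) / 2) * ‖ξ - ξ'‖ ^ 2) := by
  have hξ : θ * ‖ξ‖ ^ 2 ≤ |θ| * ‖ξ‖ ^ 2 := by gcongr; exact le_abs_self θ
  have hξ' : -θ * ‖ξ'‖ ^ 2 ≤ |θ| * ‖ξ'‖ ^ 2 := by gcongr; exact neg_le_abs θ
  have hsub := mul_le_mul_of_nonneg_left (norm_sub_sq_le_two_mul_add_sq ξ ξ') (sub_nonneg.mpr hθ)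
  rw [← Real.exp_add, Real.exp_le_exp]
  linarith

theorem norm_sub_sq_mul_exp_mul_exp_weight_le {θ : ℝ} (hθ : |θ| < 1 / 4) (ξ ξ' : E) :
    ‖ξ - ξ'‖ ^ 2 * (Real.exp (-(‖ξ‖ ^ 2 + ‖ξ'‖ ^ 2) / 4) *
        Real.exp (θ * ‖ξ‖ ^ 2 - θ * ‖ξ'‖ ^ 2)) ≤
      Real.exp (-1) / ((1 / 4 - |θ|) / 4) *
        Real.exp (-((1 / 4 - |θ|) / 4) * ‖ξ - ξ'‖ ^ 2) := by
  have hrate : 0 < (1 / 4 - |θ|) / 4 := by linarith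
  calc ‖ξ - ξ'‖ ^ 2 * (Real.exp (-(‖ξ‖ ^ 2 + ‖ξ'‖ ^ 2) / 4) *
        Real.exp (θ * ‖ξ‖ ^ 2 - θ * ‖ξ'‖ ^ 2))
      ≤ ‖ξ - ξ'‖ ^ 2 * Real.exp (-((1 / 4 - |θ|) / 2) * ‖ξ - ξ'‖ ^ 2) := by
        gcongr
        exact exp_neg_norm_sq_add_mul_exp_weight_le hθ.le ξ ξ'
    _ = ‖ξ - ξ'‖ ^ 2 *
        Real.exp (-((1 / 4 - |θ|) / 4 + (1 / 4 - |θ|) / 4) * ‖ξ - ξ'‖ ^ 2) := by ring_nf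
    _ ≤ _ := mul_exp_neg_add_mul_le _ hrate _

theorem exp_neg_norm_sub_sq_mul_exp_weight_le (θ : ℝ) {ξ ξ' : E} (hne : ‖ξ - ξ'‖ ≠ 0) :
    Real.exp (-‖ξ - ξ'‖ ^ 2 / 8 - (‖ξ‖ ^ 2 - ‖ξ'‖ ^ 2) ^ 2 / (8 * ‖ξ - ξ'‖ ^ 2)) *
        Real.exp (θ * ‖ξ‖ ^ 2 - θ * ‖ξ'‖ ^ 2) ≤
      Real.exp (-(1 / 8 - 2 * θ ^ 2) * ‖ξ - ξ'‖ ^ 2) := by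
  rw [← Real.exp_add, Real.exp_le_exp]
  linarith [mul_le_sq_div_add_mul_sq θ (‖ξ‖ ^ 2 - ‖ξ'‖ ^ 2) hne]

end SeminormedAddGroup

theorem grad_kernel_weighted_bound_general {E : Type*} [NormedAddGroup E] {θ C₁ C₂ : ℝ}
    (hθ : |θ| < 1 / 4) (hC₁ : 0 < C₁) (hC₂ : 0 < C₂) :
    ∃ C > (0 : ℝ), ∃ ϱ > (0 : ℝ), ∀ ξ ξ' : E, ξ ≠ ξ' →
      (C₁ * ‖ξ - ξ'‖ * Real.exp (-(‖ξ‖ ^ 2 + ‖ξ'‖ ^ 2) / 4) +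
          C₂ * ‖ξ - ξ'‖⁻¹ * Real.exp
            (-‖ξ - ξ'‖ ^ 2 / 8 - (‖ξ‖ ^ 2 - ‖ξ'‖ ^ 2) ^ 2 / (8 * ‖ξ - ξ'‖ ^ 2))) *
          Real.exp (θ * ‖ξ‖ ^ 2 - θ * ‖ξ'‖ ^ 2) ≤
        C * Real.exp (-ϱ * ‖ξ - ξ'‖ ^ 2) / ‖ξ - ξ'‖ := by
  set ϱ := (1 / 4 - |θ|) / 4 with hϱ_def
  have hϱ : 0 < ϱ := by linarith
  refine ⟨C₁ * (Real.exp (-1) / ϱ) + C₂, by positivity, ϱ, hϱ, fun ξ ξ' hne ↦ ?_⟩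
  have hd : 0 < ‖ξ - ξ'‖ := norm_sub_pos_iff.mpr hne
  have hk₁ := norm_sub_sq_mul_exp_mul_exp_weight_le hθ ξ ξ'
  have hk₂ := exp_neg_norm_sub_sq_mul_exp_weight_le θ hd.ne'
  have hrate : Real.exp (-(1 / 8 - 2 * θ ^ 2) * ‖ξ - ξ'‖ ^ 2) ≤
      Real.exp (-ϱ * ‖ξ - ξ'‖ ^ 2) := by
    gcongr
    exact quarter_sub_abs_div_four_le hθ.le
  have hsum := add_le_add (mul_le_mul_of_nonneg_left hk₁ hC₁.le)
    (mul_le_mul_of_nonneg_left (hk₂.trans hrate) hC₂.le)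
  rw [le_div_iff₀ hd]
  convert hsum using 1
  · field_simp
  · ring

/-- for `0 ≤ θ < 1/4`, the weighted Grad kernel satisfies the
pointwise bound
`(k₁(ξ,ξ')+k₂(ξ,ξ')) e^{θ|ξ|²−θ|ξ'|²} ≤ C e^{−ϱ|ξ−ξ'|²}/|ξ−ξ'|`. -/
theorem grad_kernel_weighted_bound (θ C₁ C₂ : ℝ)
    (hθ₀ : 0 ≤ θ) (hθ : θ < 1/4) (hC₁ : 0 < C₁) (hC₂ : 0 < C₂) :
    ∃ C > (0:ℝ), ∃ ϱ > (0:ℝ), ∀ ξ ξ' : EuclideanSpace ℝ (Fin 3), ξ ≠ ξ' →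
      (gradK1 C₁ ξ ξ' + gradK2 C₂ ξ ξ') * Real.exp (θ * ‖ξ‖ ^ 2 - θ * ‖ξ'‖ ^ 2) ≤
        C * Real.exp (-ϱ * ‖ξ - ξ'‖ ^ 2) / ‖ξ - ξ'‖ :=
  grad_kernel_weighted_bound_general (abs_lt.mpr ⟨by linarith, hθ⟩) hC₁ hC₂
end
end

section
/- There exists θ̃₀ ∈ (0,1/4) such that for every θ̃ ∈ (0, θ̃₀] there exist constants C > 0 and ϱ > 0 with the following property: for all ξ ≠ ξ' in ℝ³, the gradients in ξ of the Grad kernels satisfy (|∇_ξ k₁(ξ,ξ')| + |∇_ξ k₂(ξ,ξ')|) · e^{θ̃|ξ|² − θ̃|ξ'|²} ≤ C (1 + |ξ|²) · e^{−ϱ|ξ−ξ'|²} / |ξ−ξ'|². -/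
/-!
Write `r = |ξ - ξ'|` and `s = (|ξ|² - |ξ'|²) / r`. The second kernel is then
`C₂ r⁻¹ exp (-(r² + s²) / 8)` and the weight is `exp (θ r s)`, so for `|θ| < 1/4` the total
exponent is a negative definite quadratic form in `(r, s)`. For the first kernel the total exponent
is at most `-(1/4 - |θ|) (|ξ|² + |ξ'|²)`, and `r² ≤ 2 (|ξ|² + |ξ'|²)`. Since `r`, `|ξ|²` and `s`
have gradients of norm at most `1`, `2 |ξ|` and `(2 |ξ| + |s|) / r`, differentiating costs only
`(1 + |ξ|²) / r²` times a polynomial in `r` and `s`, which half of the Gaussian decay absorbs.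
-/

noncomputable section

section Calculus

variable {E : Type*} [NormedAddCommGroup E]

lemma norm_fderiv_mul_le {𝕜 : Type*} [NontriviallyNormedField 𝕜] [NormedSpace 𝕜 E]
    {f g : E → 𝕜} {x : E} (hf : DifferentiableAt 𝕜 f x) (hg : DifferentiableAt 𝕜 g x) :
    ‖fderiv 𝕜 (fun y => f y * g y) x‖ ≤ ‖f x‖ * ‖fderiv 𝕜 g x‖ + ‖g x‖ * ‖fderiv 𝕜 f x‖ := by
  rw [fderiv_fun_mul hf hg, ← norm_smul, ← norm_smul]
  exact norm_add_le _ _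

lemma norm_fderiv_inv {𝕜 : Type*} [NontriviallyNormedField 𝕜] [NormedSpace 𝕜 E]
    {f : E → 𝕜} {x : E} (hf : DifferentiableAt 𝕜 f x) (hx : f x ≠ 0) :
    ‖fderiv 𝕜 (fun y => (f y)⁻¹) x‖ = ‖fderiv 𝕜 f x‖ / ‖f x‖ ^ 2 := by
  have h := (hasDerivAt_inv hx).comp_hasFDerivAt x hf.hasFDerivAt
  rw [show (fun y => (f y)⁻¹) = Inv.inv ∘ f from rfl, h.fderiv, norm_smul, norm_neg, norm_inv,
    norm_pow, inv_mul_eq_div]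

variable [NormedSpace ℝ E]

lemma norm_fderiv_sq {f : E → ℝ} {x : E} (hf : DifferentiableAt ℝ f x) :
    ‖fderiv ℝ (fun y => f y ^ 2) x‖ = 2 * |f x| * ‖fderiv ℝ f x‖ := by
  rw [fderiv_fun_pow 2 hf, norm_smul]
  simp

lemma norm_fderiv_mul_exp_le {f g : E → ℝ} {x : E}
    (hf : DifferentiableAt ℝ f x) (hg : DifferentiableAt ℝ g x) :
    ‖fderiv ℝ (fun y => f y * Real.exp (g y)) x‖ ≤
      (‖fderiv ℝ f x‖ + |f x| * ‖fderiv ℝ g x‖) * Real.exp (g x) := by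
  refine (norm_fderiv_mul_le hf hg.exp).trans_eq ?_
  rw [fderiv_exp hg, norm_smul, Real.norm_eq_abs, Real.norm_eq_abs, Real.abs_exp]
  ring

lemma norm_fderiv_norm_sub_const_le (x y : E) : ‖fderiv ℝ (fun z => ‖z - y‖) x‖ ≤ 1 := by
  rw [fderiv_comp_sub]
  exact NNReal.coe_one ▸ norm_fderiv_le_of_lipschitz ℝ lipschitzWith_one_norm

end Calculus

section Inequalities

lemma one_add_pow_mul_exp_le {c x y : ℝ} (n : ℕ) (hc : 0 < c) (hx : 0 ≤ x) (hyx : y ≤ x) :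
    (1 + x) ^ n * Real.exp (-(2 * c) * x) ≤
      n.factorial * Real.exp c / c ^ n * Real.exp (-c * y) := by
  have hpow : (1 + x) ^ n ≤ n.factorial * Real.exp (c * (1 + x)) / c ^ n := by
    have h := Real.pow_div_factorial_le_exp (c * (1 + x)) (by positivity) n
    rw [div_le_iff₀' (by positivity), mul_pow] at h
    rwa [le_div_iff₀' (by positivity)]
  calc (1 + x) ^ n * Real.exp (-(2 * c) * x)
      ≤ n.factorial * Real.exp (c * (1 + x)) / c ^ n * Real.exp (-(2 * c) * x) := by gcongr
    _ = n.factorial / c ^ n * Real.exp (c * (1 + x) + -(2 * c) * x) := by rw [Real.exp_add]; ring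
    _ = n.factorial / c ^ n * Real.exp (c + -c * x) := by ring_nf
    _ = n.factorial * Real.exp c / c ^ n * Real.exp (-c * x) := by rw [Real.exp_add]; ring
    _ ≤ n.factorial * Real.exp c / c ^ n * Real.exp (-c * y) := by
      gcongr ?_ * Real.exp ?_
      nlinarith

lemma mul_sub_le_abs_mul_add {θ p q : ℝ} (hp : 0 ≤ p) (hq : 0 ≤ q) :
    θ * (p - q) ≤ |θ| * (p + q) := by
  nlinarith [mul_le_mul_of_nonneg_right (le_abs_self θ) hp,
    mul_le_mul_of_nonneg_right (neg_abs_le θ) hq]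

lemma two_mul_mul_mul_le_abs_mul_add_sq (θ r s : ℝ) :
    2 * (θ * (r * s)) ≤ |θ| * (r ^ 2 + s ^ 2) := by
  have hsign : θ * (r * s) ≤ |θ| * |r * s| := (le_abs_self _).trans_eq (abs_mul _ _)
  have hamgm : 2 * |r * s| ≤ r ^ 2 + s ^ 2 := by
    simpa [abs_mul, mul_assoc, sq_abs] using two_mul_le_add_sq |r| |s|
  nlinarith [mul_le_mul_of_nonneg_left hamgm (abs_nonneg θ)]

lemma norm_sub_sq_le_two_mul_add {E : Type*} [SeminormedAddGroup E] (x y : E) :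
    ‖x - y‖ ^ 2 ≤ 2 * (‖x‖ ^ 2 + ‖y‖ ^ 2) :=
  (pow_le_pow_left₀ (norm_nonneg _) (norm_sub_le x y) 2).trans add_sq_le

end Inequalities

section Kernels

variable {E : Type*} [NormedAddCommGroup E]

/-- The difference quotient `(|ξ|² - |ξ'|²) / |ξ - ξ'|` of the squared norm (`0` when `ξ = ξ'`), the
second variable besides `|ξ - ξ'|` in which the exponent of the second Grad kernel is quadratic. -/
def normSqSlope (ξ ξ' : E) : ℝ :=
  (‖ξ‖ ^ 2 - ‖ξ'‖ ^ 2) / ‖ξ - ξ'‖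

/-- The first Grad kernel `C |ξ - ξ'| e^{-(|ξ|² + |ξ'|²)/4}` on a normed group; it is `gradK1` on
`ℝ³`. -/
def gradKernel₁ (C : ℝ) (ξ ξ' : E) : ℝ :=
  C * ‖ξ - ξ'‖ * Real.exp (-(‖ξ‖ ^ 2 + ‖ξ'‖ ^ 2) / 4)

/-- The second Grad kernel `C |ξ - ξ'|⁻¹ e^{-|ξ - ξ'|²/8 - (|ξ|² - |ξ'|²)²/(8|ξ - ξ'|²)}` on a
normed group; it is `gradK2` on `ℝ³`. -/
def gradKernel₂ (C : ℝ) (ξ ξ' : E) : ℝ :=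
  C * ‖ξ - ξ'‖⁻¹ *
    Real.exp (-‖ξ - ξ'‖ ^ 2 / 8 - (‖ξ‖ ^ 2 - ‖ξ'‖ ^ 2) ^ 2 / (8 * ‖ξ - ξ'‖ ^ 2))

lemma norm_sub_mul_normSqSlope {ξ ξ' : E} (h : ξ ≠ ξ') :
    ‖ξ - ξ'‖ * normSqSlope ξ ξ' = ‖ξ‖ ^ 2 - ‖ξ'‖ ^ 2 :=
  mul_div_cancel₀ _ (norm_sub_pos_iff.mpr h).ne'

lemma gradKernel₂_eq_mul_exp_normSqSlope (C : ℝ) (ξ ξ' : E) :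
    gradKernel₂ C ξ ξ' =
      C * ‖ξ - ξ'‖⁻¹ * Real.exp (-(1 / 8) * (‖ξ - ξ'‖ ^ 2 + normSqSlope ξ ξ' ^ 2)) := by
  rw [gradKernel₂, normSqSlope]
  ring_nf

end Kernels

section GradientBounds

variable {E : Type*} [NormedAddCommGroup E] [InnerProductSpace ℝ E] {ξ ξ' : E}

lemma norm_fderiv_norm_sq (x : E) : ‖fderiv ℝ (fun y => ‖y‖ ^ 2) x‖ = 2 * ‖x‖ := by
  rw [fderiv_norm_sq_apply, ← Nat.cast_smul_eq_nsmul ℝ, norm_smul, innerSL_apply_norm]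
  simp

lemma differentiableAt_norm_sub_const (h : ξ ≠ ξ') :
    DifferentiableAt ℝ (fun η => ‖η - ξ'‖) ξ :=
  (differentiableAt_id.sub_const ξ').norm ℝ (sub_ne_zero.mpr h)

lemma differentiableAt_inv_norm_sub_const (h : ξ ≠ ξ') :
    DifferentiableAt ℝ (fun η => ‖η - ξ'‖⁻¹) ξ :=
  (differentiableAt_norm_sub_const h).fun_inv (norm_sub_pos_iff.mpr h).ne'

lemma differentiableAt_normSqSlope (h : ξ ≠ ξ') :
    DifferentiableAt ℝ (fun η => normSqSlope η ξ') ξ :=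
  ((differentiableAt_id.norm_sq ℝ).sub_const _).fun_mul (differentiableAt_inv_norm_sub_const h)

lemma norm_fderiv_inv_norm_sub_const_le (h : ξ ≠ ξ') :
    ‖fderiv ℝ (fun η => ‖η - ξ'‖⁻¹) ξ‖ ≤ 1 / ‖ξ - ξ'‖ ^ 2 := by
  rw [norm_fderiv_inv (differentiableAt_norm_sub_const h) (norm_sub_pos_iff.mpr h).ne', norm_norm]
  gcongr
  exact norm_fderiv_norm_sub_const_le ξ ξ'

lemma norm_fderiv_normSqSlope_le (h : ξ ≠ ξ') :
    ‖fderiv ℝ (fun η => normSqSlope η ξ') ξ‖ ≤ (2 * ‖ξ‖ + |normSqSlope ξ ξ'|) / ‖ξ - ξ'‖ := by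
  have hnum : ‖fderiv ℝ (fun η : E => ‖η‖ ^ 2 - ‖ξ'‖ ^ 2) ξ‖ = 2 * ‖ξ‖ := by
    rw [fderiv_sub_const, norm_fderiv_norm_sq]
  simp only [normSqSlope, div_eq_mul_inv _ ‖_ - ξ'‖]
  calc _ ≤ |‖ξ‖ ^ 2 - ‖ξ'‖ ^ 2| * ‖fderiv ℝ (fun η : E => ‖η - ξ'‖⁻¹) ξ‖ +
        ‖‖ξ - ξ'‖⁻¹‖ * ‖fderiv ℝ (fun η : E => ‖η‖ ^ 2 - ‖ξ'‖ ^ 2) ξ‖ :=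
        norm_fderiv_mul_le ((differentiableAt_id.norm_sq ℝ).sub_const _)
          (differentiableAt_inv_norm_sub_const h)
    _ ≤ |‖ξ‖ ^ 2 - ‖ξ'‖ ^ 2| * (1 / ‖ξ - ξ'‖ ^ 2) + ‖ξ - ξ'‖⁻¹ * (2 * ‖ξ‖) := by
      rw [hnum, norm_inv, norm_norm]
      gcongr
      exact norm_fderiv_inv_norm_sub_const_le h
    _ = _ := by
      rw [abs_mul, abs_inv, abs_norm]
      ring

lemma norm_fderiv_norm_sub_sq_add_normSqSlope_sq_le (h : ξ ≠ ξ') :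
    ‖fderiv ℝ (fun η => ‖η - ξ'‖ ^ 2 + normSqSlope η ξ' ^ 2) ξ‖ ≤
      2 * ‖ξ - ξ'‖ +
        2 * |normSqSlope ξ ξ'| * ((2 * ‖ξ‖ + |normSqSlope ξ ξ'|) / ‖ξ - ξ'‖) := by
  have hr := differentiableAt_norm_sub_const h
  have hs := differentiableAt_normSqSlope h
  rw [fderiv_fun_add (hr.fun_pow 2) (hs.fun_pow 2)]
  refine (norm_add_le _ _).trans ?_
  rw [norm_fderiv_sq hr, norm_fderiv_sq hs, abs_norm]
  exact add_le_add
    (mul_le_of_le_one_right (by positivity) (norm_fderiv_norm_sub_const_le ξ ξ'))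
    (mul_le_mul_of_nonneg_left (norm_fderiv_normSqSlope_le h) (by positivity))

lemma norm_fderiv_gradKernel₁_le (C : ℝ) (h : ξ ≠ ξ') :
    ‖fderiv ℝ (fun η => gradKernel₁ C η ξ') ξ‖ ≤
      |C| * (1 + ‖ξ - ξ'‖ * ‖ξ‖ / 2) * Real.exp (-(‖ξ‖ ^ 2 + ‖ξ'‖ ^ 2) / 4) := by
  have hr := differentiableAt_norm_sub_const h
  have hsq : DifferentiableAt ℝ (fun η : E => ‖η‖ ^ 2 + ‖ξ'‖ ^ 2) ξ :=
    (differentiableAt_id.norm_sq ℝ).add_const _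
  have hprefactor : ‖fderiv ℝ (fun η => C * ‖η - ξ'‖) ξ‖ ≤ |C| := by
    rw [fderiv_const_mul hr, norm_smul]
    exact mul_le_of_le_one_right (norm_nonneg C) (norm_fderiv_norm_sub_const_le ξ ξ')
  have hexponent : ‖fderiv ℝ (fun η : E => -(‖η‖ ^ 2 + ‖ξ'‖ ^ 2) / 4) ξ‖ = ‖ξ‖ / 2 := by
    simp only [div_eq_inv_mul, mul_neg, ← neg_mul]
    rw [fderiv_const_mul hsq, fderiv_add_const, norm_smul, norm_fderiv_norm_sq, norm_neg, norm_inv,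
      Real.norm_ofNat]
    ring
  refine (norm_fderiv_mul_exp_le (hr.const_mul C) (by fun_prop)).trans ?_
  rw [hexponent, abs_mul, abs_norm]
  gcongr
  linarith

lemma norm_fderiv_gradKernel₂_le (C : ℝ) (h : ξ ≠ ξ') :
    ‖fderiv ℝ (fun η => gradKernel₂ C η ξ') ξ‖ ≤
      |C| * (1 + ‖ξ - ξ'‖ ^ 2 / 4 +
          |normSqSlope ξ ξ'| * (2 * ‖ξ‖ + |normSqSlope ξ ξ'|) / 4) / ‖ξ - ξ'‖ ^ 2 *
        Real.exp (-(1 / 8) * (‖ξ - ξ'‖ ^ 2 + normSqSlope ξ ξ' ^ 2)) := by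
  have hr : 0 < ‖ξ - ξ'‖ := norm_sub_pos_iff.mpr h
  have hinv := differentiableAt_inv_norm_sub_const h
  have hquad := ((differentiableAt_norm_sub_const h).fun_pow 2).fun_add
    ((differentiableAt_normSqSlope h).fun_pow 2)
  simp only [gradKernel₂_eq_mul_exp_normSqSlope]
  refine (norm_fderiv_mul_exp_le (hinv.const_mul C) (hquad.const_mul _)).trans ?_
  rw [fderiv_const_mul hinv, fderiv_const_mul hquad, norm_smul, norm_smul, abs_mul, abs_inv,
    abs_norm, norm_neg, Real.norm_eq_abs, Real.norm_of_nonneg (by norm_num : (0 : ℝ) ≤ 1 / 8)]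
  gcongr
  calc _ ≤ |C| * (1 / ‖ξ - ξ'‖ ^ 2) + |C| * ‖ξ - ξ'‖⁻¹ * (1 / 8 * (2 * ‖ξ - ξ'‖ +
        2 * |normSqSlope ξ ξ'| * ((2 * ‖ξ‖ + |normSqSlope ξ ξ'|) / ‖ξ - ξ'‖))) := by
        gcongr
        · exact norm_fderiv_inv_norm_sub_const_le h
        · exact norm_fderiv_norm_sub_sq_add_normSqSlope_sq_le h
    _ = _ := by
      field_simp
      ring

lemma norm_fderiv_gradKernel₁_mul_exp_le {θ : ℝ} (hθ : |θ| ≤ 1 / 4) (C : ℝ) (h : ξ ≠ ξ') :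
    ‖fderiv ℝ (fun η => gradKernel₁ C η ξ') ξ‖ * Real.exp (θ * ‖ξ‖ ^ 2 - θ * ‖ξ'‖ ^ 2) ≤
      |C| * (1 + ‖ξ‖ ^ 2) / ‖ξ - ξ'‖ ^ 2 *
        ((1 + ‖ξ - ξ'‖ ^ 2) ^ 2 * Real.exp (-((1 / 4 - |θ|) / 2) * ‖ξ - ξ'‖ ^ 2)) := by
  have hr : 0 < ‖ξ - ξ'‖ := norm_sub_pos_iff.mpr h
  have hpoly : 1 + ‖ξ - ξ'‖ * ‖ξ‖ / 2 ≤
      (1 + ‖ξ‖ ^ 2) / ‖ξ - ξ'‖ ^ 2 * (1 + ‖ξ - ξ'‖ ^ 2) ^ 2 := by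
    have hprod : 1 + ‖ξ - ξ'‖ * ‖ξ‖ / 2 ≤ (1 + ‖ξ‖ ^ 2) * (1 + ‖ξ - ξ'‖ ^ 2) := by
      nlinarith [sq_nonneg (‖ξ - ξ'‖ - ‖ξ‖), sq_nonneg (‖ξ‖ * ‖ξ - ξ'‖)]
    rw [div_mul_eq_mul_div, le_div_iff₀ (by positivity), sq (1 + _), ← mul_assoc]
    gcongr
    linarith
  have hexp : -(‖ξ‖ ^ 2 + ‖ξ'‖ ^ 2) / 4 + (θ * ‖ξ‖ ^ 2 - θ * ‖ξ'‖ ^ 2) ≤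
      -((1 / 4 - |θ|) / 2) * ‖ξ - ξ'‖ ^ 2 := by
    have hweight := mul_sub_le_abs_mul_add (θ := θ) (sq_nonneg ‖ξ‖) (sq_nonneg ‖ξ'‖)
    have hdist := mul_le_mul_of_nonneg_left (norm_sub_sq_le_two_mul_add ξ ξ') (sub_nonneg.mpr hθ)
    linarith
  calc _ ≤ |C| * (1 + ‖ξ - ξ'‖ * ‖ξ‖ / 2) * Real.exp (-(‖ξ‖ ^ 2 + ‖ξ'‖ ^ 2) / 4) *
        Real.exp (θ * ‖ξ‖ ^ 2 - θ * ‖ξ'‖ ^ 2) := by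
        gcongr
        exact norm_fderiv_gradKernel₁_le C h
    _ = |C| * (1 + ‖ξ - ξ'‖ * ‖ξ‖ / 2) *
        Real.exp (-(‖ξ‖ ^ 2 + ‖ξ'‖ ^ 2) / 4 + (θ * ‖ξ‖ ^ 2 - θ * ‖ξ'‖ ^ 2)) := by
      rw [Real.exp_add, mul_assoc]
    _ ≤ |C| * ((1 + ‖ξ‖ ^ 2) / ‖ξ - ξ'‖ ^ 2 * (1 + ‖ξ - ξ'‖ ^ 2) ^ 2) *
        Real.exp (-((1 / 4 - |θ|) / 2) * ‖ξ - ξ'‖ ^ 2) := by gcongr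
    _ = _ := by ring

lemma norm_fderiv_gradKernel₂_mul_exp_le (θ C : ℝ) (h : ξ ≠ ξ') :
    ‖fderiv ℝ (fun η => gradKernel₂ C η ξ') ξ‖ * Real.exp (θ * ‖ξ‖ ^ 2 - θ * ‖ξ'‖ ^ 2) ≤
      |C| * (1 + ‖ξ‖ ^ 2) / ‖ξ - ξ'‖ ^ 2 *
        ((1 + (‖ξ - ξ'‖ ^ 2 + normSqSlope ξ ξ' ^ 2)) *
          Real.exp (-((1 / 4 - |θ|) / 2) * (‖ξ - ξ'‖ ^ 2 + normSqSlope ξ ξ' ^ 2))) := by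
  set r := ‖ξ - ξ'‖
  set s := normSqSlope ξ ξ'
  have hpoly : 1 + r ^ 2 / 4 + |s| * (2 * ‖ξ‖ + |s|) / 4 ≤
      (1 + ‖ξ‖ ^ 2) * (1 + (r ^ 2 + s ^ 2)) := by
    nlinarith [sq_nonneg (|s| - ‖ξ‖), sq_abs s, sq_nonneg r, sq_nonneg (‖ξ‖ * r),
      sq_nonneg (‖ξ‖ * s)]
  have hexp : -(1 / 8) * (r ^ 2 + s ^ 2) + (θ * ‖ξ‖ ^ 2 - θ * ‖ξ'‖ ^ 2) ≤
      -((1 / 4 - |θ|) / 2) * (r ^ 2 + s ^ 2) := by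
    rw [← mul_sub, ← norm_sub_mul_normSqSlope h]
    linarith [two_mul_mul_mul_le_abs_mul_add_sq θ r s]
  calc _ ≤ |C| * (1 + r ^ 2 / 4 + |s| * (2 * ‖ξ‖ + |s|) / 4) / r ^ 2 *
        Real.exp (-(1 / 8) * (r ^ 2 + s ^ 2)) * Real.exp (θ * ‖ξ‖ ^ 2 - θ * ‖ξ'‖ ^ 2) := by
        gcongr
        exact norm_fderiv_gradKernel₂_le C h
    _ = |C| * (1 + r ^ 2 / 4 + |s| * (2 * ‖ξ‖ + |s|) / 4) / r ^ 2 *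
        Real.exp (-(1 / 8) * (r ^ 2 + s ^ 2) + (θ * ‖ξ‖ ^ 2 - θ * ‖ξ'‖ ^ 2)) := by
      rw [Real.exp_add, mul_assoc]
    _ ≤ |C| * ((1 + ‖ξ‖ ^ 2) * (1 + (r ^ 2 + s ^ 2))) / r ^ 2 *
        Real.exp (-((1 / 4 - |θ|) / 2) * (r ^ 2 + s ^ 2)) := by gcongr
    _ = _ := by ring

end GradientBounds

theorem grad_kernel_gradient_bound_general {E : Type*} [NormedAddCommGroup E]
    [InnerProductSpace ℝ E] {θ : ℝ} (hθ : |θ| < 1 / 4) :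
    ∃ A > (0 : ℝ), ∃ ϱ > (0 : ℝ), ∀ (C₁ C₂ : ℝ) (ξ ξ' : E), ξ ≠ ξ' →
      (‖fderiv ℝ (fun η => gradKernel₁ C₁ η ξ') ξ‖ +
          ‖fderiv ℝ (fun η => gradKernel₂ C₂ η ξ') ξ‖) *
        Real.exp (θ * ‖ξ‖ ^ 2 - θ * ‖ξ'‖ ^ 2) ≤
      A * (|C₁| + |C₂|) * (1 + ‖ξ‖ ^ 2) * Real.exp (-ϱ * ‖ξ - ξ'‖ ^ 2) / ‖ξ - ξ'‖ ^ 2 := by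
  obtain ⟨ϱ, hϱ, hrate⟩ : ∃ ϱ > 0, (1 / 4 - |θ|) / 2 = 2 * ϱ :=
    ⟨(1 / 4 - |θ|) / 4, by linarith, by ring⟩
  let A (n : ℕ) : ℝ := n.factorial * Real.exp ϱ / ϱ ^ n
  have hA (n : ℕ) : 0 < A n := by positivity
  refine ⟨A 2 + A 1, add_pos (hA 2) (hA 1), ϱ, hϱ, fun C₁ C₂ ξ ξ' h => ?_⟩
  have hk₁ := norm_fderiv_gradKernel₁_mul_exp_le hθ.le C₁ h
  have hk₂ := norm_fderiv_gradKernel₂_mul_exp_le θ C₂ h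
  have habsorb₁ := one_add_pow_mul_exp_le 2 hϱ (sq_nonneg ‖ξ - ξ'‖) le_rfl
  have habsorb₂ := one_add_pow_mul_exp_le (x := ‖ξ - ξ'‖ ^ 2 + normSqSlope ξ ξ' ^ 2) 1 hϱ
    (by positivity) (le_add_of_nonneg_right (sq_nonneg (normSqSlope ξ ξ')))
  rw [hrate] at hk₁ hk₂
  rw [pow_one] at habsorb₂
  have hcoeff : |C₁| * A 2 + |C₂| * A 1 ≤ (A 2 + A 1) * (|C₁| + |C₂|) := by
    nlinarith [mul_nonneg (abs_nonneg C₁) (hA 1).le, mul_nonneg (abs_nonneg C₂) (hA 2).le]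
  calc _ ≤ |C₁| * (1 + ‖ξ‖ ^ 2) / ‖ξ - ξ'‖ ^ 2 * (A 2 * Real.exp (-ϱ * ‖ξ - ξ'‖ ^ 2)) +
        |C₂| * (1 + ‖ξ‖ ^ 2) / ‖ξ - ξ'‖ ^ 2 * (A 1 * Real.exp (-ϱ * ‖ξ - ξ'‖ ^ 2)) := by
        rw [add_mul]
        exact add_le_add (hk₁.trans (by gcongr)) (hk₂.trans (by gcongr))
    _ = (|C₁| * A 2 + |C₂| * A 1) * (1 + ‖ξ‖ ^ 2) * Real.exp (-ϱ * ‖ξ - ξ'‖ ^ 2) /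
        ‖ξ - ξ'‖ ^ 2 := by ring
    _ ≤ _ := by gcongr

/-- there is `θ̃₀ ∈ (0,1/4)` such that for every `θ̃ ∈ (0,θ̃₀]` the
gradients in `ξ` of the Grad kernels satisfy
`(|∇_ξ k₁| + |∇_ξ k₂|) e^{θ̃|ξ|²−θ̃|ξ'|²} ≤ C(1+|ξ|²) e^{−ϱ|ξ−ξ'|²}/|ξ−ξ'|²`. -/
theorem grad_kernel_gradient_bound (C₁ C₂ : ℝ) (hC₁ : 0 < C₁) (hC₂ : 0 < C₂) :
    ∃ θ₀ : ℝ, 0 < θ₀ ∧ θ₀ < 1/4 ∧ ∀ θt : ℝ, 0 < θt → θt ≤ θ₀ →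
      ∃ C > (0:ℝ), ∃ ϱ > (0:ℝ), ∀ ξ ξ' : EuclideanSpace ℝ (Fin 3), ξ ≠ ξ' →
        (‖fderiv ℝ (fun η => gradK1 C₁ η ξ') ξ‖ +
            ‖fderiv ℝ (fun η => gradK2 C₂ η ξ') ξ‖) *
          Real.exp (θt * ‖ξ‖ ^ 2 - θt * ‖ξ'‖ ^ 2) ≤
        C * (1 + ‖ξ‖ ^ 2) * Real.exp (-ϱ * ‖ξ - ξ'‖ ^ 2) / ‖ξ - ξ'‖ ^ 2 := by
  refine ⟨1 / 8, by norm_num, by norm_num, fun θ hθ hθ₀ => ?_⟩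
  obtain ⟨A, hA, ϱ, hϱ, hbound⟩ := grad_kernel_gradient_bound_general
    (E := EuclideanSpace ℝ (Fin 3)) (show |θ| < 1 / 4 by rw [abs_of_pos hθ]; linarith)
  exact ⟨A * (|C₁| + |C₂|), by positivity, ϱ, hϱ, hbound C₁ C₂⟩
end
end

section
/- For every constant C > 0 there exists a constant C' > 0 such that for every η = (η₁,η₂,η₃) ∈ ℝ³ and every a > 0, ∫_{ℝ³} e^{−C|η−ξ'|²} / |η−ξ'| · (|ξ₁'|² + a²)^{−1/2} dξ' ≤ C' · [ 1 + ln(√(1+(2η₁/a)²) + 2|η₁|/a) + ln(√(1+a⁻²) + a⁻¹) ]. -/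
open MeasureTheory

/-!
Write `x = η - ξ'` in `n + 1` coordinates; only the first one meets the weight. Each of the other
`n` is at most `‖x‖` in absolute value, so `‖x‖⁻ˢ ≤ ∏ |xⱼ|^(-s/n)` over these coordinates, and the
integrand is dominated by a product of functions of one variable. The factors
`|t|^(-s/n) exp (-C t²)` are integrable because `s < n`. In the first coordinate the weight is at
most `1` off `(-1, 1]`, where integrating the Gaussian suffices, and on `(-1, 1]` it has integral
`2 arsinh a⁻¹`. The resulting bound is uniform in `η`, and the logarithm involving `η` is
nonnegative.
-/

open Real Module

/-- The Riesz kernel `‖x‖⁻ˢ` with a Gaussian cut-off, which splits into kernels of the same form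
in the coordinates. For `0 < s` it takes the junk value `0` at the origin. -/
noncomputable def gaussianRieszKernel {E : Type*} [Norm E] (C s : ℝ) (x : E) : ℝ :=
  exp (-C * ‖x‖ ^ 2) / ‖x‖ ^ s

section Kernel

variable {C s : ℝ}

lemma gaussianRieszKernel_nonneg {E : Type*} [SeminormedAddGroup E] (x : E) :
    0 ≤ gaussianRieszKernel C s x := by
  unfold gaussianRieszKernel
  positivity

lemma integrable_gaussianRieszKernel {E : Type*} [NormedAddCommGroup E] [NormedSpace ℝ E]
    [Nontrivial E] [FiniteDimensional ℝ E] [MeasurableSpace E] [BorelSpace E] {μ : Measure E}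
    [μ.IsAddHaarMeasure] (hC : 0 < C) (hs : s < finrank ℝ E) :
    Integrable (gaussianRieszKernel C s : E → ℝ) μ := by
  have radial : IntegrableOn (fun r : ℝ ↦ r ^ (finrank ℝ E - 1 - s) * exp (-C * r ^ 2))
      (Set.Ioi 0) :=
    integrableOn_rpow_mul_exp_neg_mul_sq hC (by linarith)
  refine (integrable_fun_norm_addHaar μ (f := fun r ↦ exp (-C * r ^ 2) / r ^ s)).2
    (radial.congr_fun (fun r (hr : 0 < r) ↦ ?_) measurableSet_Ioi)
  have hpow : r ^ ((finrank ℝ E : ℝ) - 1) = r ^ (finrank ℝ E - 1) := by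
    rw [← rpow_natCast, Nat.cast_pred finrank_pos]
  simp only [smul_eq_mul]
  rw [rpow_sub hr, hpow]
  ring

variable {n : ℕ}

lemma prod_norm_succ_rpow_le_norm_rpow (hn : n ≠ 0) (hs : 0 ≤ s)
    (x : EuclideanSpace ℝ (Fin (n + 1))) :
    ∏ j : Fin n, ‖x j.succ‖ ^ (s / n) ≤ ‖x‖ ^ s :=
  calc ∏ j : Fin n, ‖x j.succ‖ ^ (s / n) ≤ ∏ _j : Fin n, ‖x‖ ^ (s / n) := by
        gcongr with j
        exact PiLp.norm_apply_le x j.succ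
    _ = ‖x‖ ^ s := by
        rw [Finset.prod_const, Finset.card_univ, Fintype.card_fin,
          ← rpow_mul_natCast (norm_nonneg x), div_mul_cancel₀ s (Nat.cast_ne_zero.2 hn)]

lemma exp_neg_mul_norm_sq_eq_mul_prod (C : ℝ) (x : EuclideanSpace ℝ (Fin (n + 1))) :
    exp (-C * ‖x‖ ^ 2) = exp (-C * x 0 ^ 2) * ∏ j : Fin n, exp (-C * ‖x j.succ‖ ^ 2) := by
  rw [← exp_sum, ← exp_add, ← Finset.mul_sum, ← mul_add, EuclideanSpace.norm_sq_eq,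
    Fin.sum_univ_succ, norm_eq_abs, sq_abs]

lemma gaussianRieszKernel_le_mul_prod (hn : n ≠ 0) (hs : 0 ≤ s)
    {x : EuclideanSpace ℝ (Fin (n + 1))} (hx : ∀ j : Fin n, x j.succ ≠ 0) :
    gaussianRieszKernel C s x ≤
      exp (-C * x 0 ^ 2) * ∏ j : Fin n, gaussianRieszKernel C (s / n) (x j.succ) := by
  have hpos : 0 < ∏ j : Fin n, ‖x j.succ‖ ^ (s / n) :=
    Finset.prod_pos fun j _ ↦ rpow_pos_of_pos (norm_pos_iff.2 (hx j)) _
  unfold gaussianRieszKernel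
  rw [Finset.prod_div_distrib, ← mul_div_assoc, ← exp_neg_mul_norm_sq_eq_mul_prod]
  gcongr
  exact prod_norm_succ_rpow_le_norm_rpow hn hs x

lemma integral_gaussianRieszKernel_sub_mul_le (hC : 0 < C) (hs : 0 ≤ s) (hsn : s < n) {k : ℝ → ℝ}
    (hk : ∀ t, 0 ≤ k t) (η : EuclideanSpace ℝ (Fin (n + 1)))
    (hint : Integrable fun t ↦ exp (-C * (η 0 - t) ^ 2) * k t) :
    ∫ ξ : EuclideanSpace ℝ (Fin (n + 1)), gaussianRieszKernel C s (η - ξ) * k (ξ 0) ≤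
      (∫ t, exp (-C * (η 0 - t) ^ 2) * k t) * (∫ t : ℝ, gaussianRieszKernel C (s / n) t) ^ n := by
  have hn : n ≠ 0 := by
    rintro rfl
    exact absurd (hs.trans_lt hsn) (by simp)
  have hkernel : Integrable (gaussianRieszKernel C (s / n) : ℝ → ℝ) :=
    integrable_gaussianRieszKernel hC (by
      rw [finrank_self, Nat.cast_one, div_lt_one (by positivity)]
      exact hsn)
  let f : Fin (n + 1) → ℝ → ℝ := Fin.cons (fun t ↦ exp (-C * (η 0 - t) ^ 2) * k t)
    fun j t ↦ gaussianRieszKernel C (s / n) (η j.succ - t)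
  have hf : ∀ i, Integrable (f i) := Fin.cases hint fun j ↦ hkernel.comp_sub_left (η j.succ)
  have hf_int : Integrable fun x : Fin (n + 1) → ℝ ↦ ∏ i, f i (x i) := Integrable.fintype_prod hf
  have hne : ∀ᵐ x : Fin (n + 1) → ℝ, ∀ j : Fin n, x j.succ ≠ η j.succ :=
    ae_all_iff.2 fun j ↦ Measure.ae_eval_ne (fun _ ↦ (volume : Measure ℝ)) j.succ (η j.succ)
  rw [← (PiLp.volume_preserving_toLp (Fin (n + 1))).integral_comp
    (MeasurableEquiv.toLp 2 (Fin (n + 1) → ℝ)).measurableEmbedding]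
  calc ∫ x : Fin (n + 1) → ℝ, gaussianRieszKernel C s (η - WithLp.toLp 2 x) * k (x 0)
      ≤ ∫ x : Fin (n + 1) → ℝ, ∏ i, f i (x i) := by
        refine integral_mono_of_nonneg (.of_forall fun x ↦
          mul_nonneg (gaussianRieszKernel_nonneg _) (hk _)) hf_int ?_
        filter_upwards [hne] with x hx
        have hle := gaussianRieszKernel_le_mul_prod (C := C) (x := η - WithLp.toLp 2 x) hn hs
          fun j ↦ sub_ne_zero.2 (hx j).symm
        refine (mul_le_mul_of_nonneg_right hle (hk (x 0))).trans_eq ?_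
        rw [Fin.prod_univ_succ]
        exact mul_right_comm _ _ _
    _ = ∏ i, ∫ t, f i t := integral_fintype_prod_volume_eq_prod f
    _ = _ := by
        simp only [f, Fin.prod_univ_succ, Fin.cons_zero, Fin.cons_succ,
          integral_sub_left_eq_self (gaussianRieszKernel C (s / n) : ℝ → ℝ) volume,
          Finset.prod_const, Finset.card_univ, Fintype.card_fin]

end Kernel

section GaussianWeight

variable {C b M : ℝ} {k : ℝ → ℝ} {S : Set ℝ}

lemma gaussian_mul_le_add_indicator (hC : 0 ≤ C) (hk : ∀ t, 0 ≤ k t) (hM : ∀ t ∉ S, k t ≤ M)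
    (hM₀ : 0 ≤ M) (t : ℝ) :
    exp (-C * (b - t) ^ 2) * k t ≤ M * exp (-C * (b - t) ^ 2) + S.indicator k t := by
  by_cases ht : t ∈ S
  · have hexp : exp (-C * (b - t) ^ 2) ≤ 1 :=
      exp_le_one_iff.2 (by nlinarith [mul_nonneg hC (sq_nonneg (b - t))])
    rw [Set.indicator_of_mem ht]
    exact (mul_le_of_le_one_left (hk t) hexp).trans (le_add_of_nonneg_left (by positivity))
  · rw [Set.indicator_of_notMem ht, add_zero, mul_comm]
    gcongr
    exact hM t ht

lemma integrable_gaussian_sub_left (hC : 0 < C) (b : ℝ) :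
    Integrable fun t : ℝ ↦ exp (-C * (b - t) ^ 2) :=
  (integrable_exp_neg_mul_sq hC).comp_sub_left b

lemma integrable_gaussian_mul (hC : 0 < C) (hS : MeasurableSet S) (hk : ∀ t, 0 ≤ k t)
    (hk_meas : AEStronglyMeasurable k) (hkS : IntegrableOn k S) (hM : ∀ t ∉ S, k t ≤ M)
    (hM₀ : 0 ≤ M) :
    Integrable fun t ↦ exp (-C * (b - t) ^ 2) * k t := by
  have hgauss := integrable_gaussian_sub_left hC b
  refine ((hgauss.const_mul M).add (hkS.integrable_indicator hS)).mono'
    (hgauss.aestronglyMeasurable.mul hk_meas) (.of_forall fun t ↦ ?_)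
  rw [norm_of_nonneg (mul_nonneg (exp_nonneg _) (hk t))]
  exact gaussian_mul_le_add_indicator hC.le hk hM hM₀ t

lemma integral_gaussian_mul_le (hC : 0 < C) (hS : MeasurableSet S) (hk : ∀ t, 0 ≤ k t)
    (hkS : IntegrableOn k S) (hM : ∀ t ∉ S, k t ≤ M) (hM₀ : 0 ≤ M) :
    ∫ t, exp (-C * (b - t) ^ 2) * k t ≤ M * √(π / C) + ∫ t in S, k t := by
  have hgauss := (integrable_gaussian_sub_left hC b).const_mul M
  have hind := hkS.integrable_indicator hS
  calc ∫ t, exp (-C * (b - t) ^ 2) * k t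
      ≤ ∫ t, (M * exp (-C * (b - t) ^ 2) + S.indicator k t) :=
        integral_mono_of_nonneg (.of_forall fun t ↦ mul_nonneg (exp_nonneg _) (hk t))
          (hgauss.add hind) (.of_forall (gaussian_mul_le_add_indicator hC.le hk hM hM₀))
    _ = M * √(π / C) + ∫ t in S, k t := by
        rw [integral_add hgauss hind, integral_indicator hS, integral_const_mul,
          integral_sub_left_eq_self (fun t : ℝ ↦ exp (-C * t ^ 2)) volume b, integral_gaussian]

end GaussianWeight

section InvSqrt

variable {a : ℝ}

lemma continuous_inv_sqrt_sq_add_sq (ha : a ≠ 0) :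
    Continuous fun t : ℝ ↦ (√(t ^ 2 + a ^ 2))⁻¹ :=
  Continuous.inv₀ (by fun_prop) fun t ↦ (sqrt_pos.2 (by positivity)).ne'

lemma hasDerivAt_arsinh_div (ha : 0 < a) (t : ℝ) :
    HasDerivAt (fun t ↦ arsinh (t / a)) (√(t ^ 2 + a ^ 2))⁻¹ t := by
  refine ((hasDerivAt_id t).div_const a).arsinh.congr_deriv ?_
  have hsq : t ^ 2 + a ^ 2 = a ^ 2 * (1 + (t / a) ^ 2) := by
    field_simp
    ring
  rw [hsq, sqrt_mul (by positivity), sqrt_sq ha.le]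
  simp [mul_comm]

lemma integral_inv_sqrt_sq_add_sq (ha : 0 < a) (u v : ℝ) :
    ∫ t in u..v, (√(t ^ 2 + a ^ 2))⁻¹ = arsinh (v / a) - arsinh (u / a) :=
  intervalIntegral.integral_eq_sub_of_hasDerivAt (fun t _ ↦ hasDerivAt_arsinh_div ha t)
    ((continuous_inv_sqrt_sq_add_sq ha.ne').intervalIntegrable u v)

lemma inv_sqrt_sq_add_sq_le_one {t : ℝ} (ht : t ∉ Set.Ioc (-1) 1) (a : ℝ) :
    (√(t ^ 2 + a ^ 2))⁻¹ ≤ 1 := by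
  have hsq : 1 ≤ t ^ 2 := by
    by_contra! h
    obtain ⟨hlt, hgt⟩ := abs_lt.1 ((sq_lt_one_iff_abs_lt_one t).1 h)
    exact ht ⟨hlt, hgt.le⟩
  exact inv_le_one_of_one_le₀ (one_le_sqrt.2 (le_add_of_le_of_nonneg hsq (sq_nonneg a)))

variable {C : ℝ}

lemma integrable_gaussian_mul_inv_sqrt (hC : 0 < C) (ha : a ≠ 0) (b : ℝ) :
    Integrable fun t : ℝ ↦ exp (-C * (b - t) ^ 2) * (√(t ^ 2 + a ^ 2))⁻¹ :=
  have hcont := continuous_inv_sqrt_sq_add_sq ha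
  integrable_gaussian_mul hC measurableSet_Ioc (fun t ↦ by positivity) hcont.aestronglyMeasurable
    hcont.integrableOn_Ioc (fun _ ht ↦ inv_sqrt_sq_add_sq_le_one ht a) zero_le_one

lemma integral_gaussian_mul_inv_sqrt_le (hC : 0 < C) (ha : 0 < a) (b : ℝ) :
    ∫ t : ℝ, exp (-C * (b - t) ^ 2) * (√(t ^ 2 + a ^ 2))⁻¹ ≤ √(π / C) + 2 * arsinh a⁻¹ := by
  have hle := integral_gaussian_mul_le (b := b) hC measurableSet_Ioc
    (fun t ↦ by positivity) (continuous_inv_sqrt_sq_add_sq ha.ne').integrableOn_Ioc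
    (fun _ ht ↦ inv_sqrt_sq_add_sq_le_one ht a) zero_le_one
  rw [← intervalIntegral.integral_of_le (by norm_num), integral_inv_sqrt_sq_add_sq ha] at hle
  simp only [neg_div, one_div, arsinh_neg] at hle
  linarith

end InvSqrt

lemma arsinh_inv_le_log_add_log (x : ℝ) {a : ℝ} (ha : 0 < a) :
    arsinh a⁻¹ ≤ log (√(1 + (2 * x / a) ^ 2) + 2 * |x| / a) + log (√(1 + a⁻¹ ^ 2) + a⁻¹) := by
  have hone : 1 ≤ √(1 + (2 * x / a) ^ 2) := one_le_sqrt.2 (le_add_of_nonneg_right (sq_nonneg _))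
  have hlog : 0 ≤ log (√(1 + (2 * x / a) ^ 2) + 2 * |x| / a) :=
    log_nonneg (le_add_of_le_of_nonneg hone (by positivity))
  rw [arsinh, add_comm a⁻¹]
  exact le_add_of_nonneg_left hlog

theorem gaussian_singular_integral_log_bound_general {n : ℕ} {s C : ℝ} (hs : 0 ≤ s) (hsn : s < n)
    (hC : 0 < C) :
    ∃ C' > (0 : ℝ), ∀ η : EuclideanSpace ℝ (Fin (n + 1)), ∀ a : ℝ, 0 < a →
      ∫ ξ : EuclideanSpace ℝ (Fin (n + 1)),
        exp (-C * ‖η - ξ‖ ^ 2) / ‖η - ξ‖ ^ s * (√(ξ 0 ^ 2 + a ^ 2))⁻¹ ≤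
      C' * (1 + arsinh a⁻¹) := by
  have hK : 0 ≤ ∫ t : ℝ, gaussianRieszKernel C (s / n) t :=
    integral_nonneg gaussianRieszKernel_nonneg
  set K := ∫ t : ℝ, gaussianRieszKernel C (s / n) t
  refine ⟨(√(π / C) + 2) * (K ^ n + 1), by positivity, fun η a ha ↦ ?_⟩
  have harsinh : 0 ≤ arsinh a⁻¹ := arsinh_nonneg_iff.2 (by positivity)
  calc _ ≤ (∫ t, exp (-C * (η 0 - t) ^ 2) * (√(t ^ 2 + a ^ 2))⁻¹) * K ^ n :=
        integral_gaussianRieszKernel_sub_mul_le hC hs hsn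
          (k := fun t ↦ (√(t ^ 2 + a ^ 2))⁻¹) (fun t ↦ by positivity) η
          (integrable_gaussian_mul_inv_sqrt hC ha.ne' (η 0))
    _ ≤ (√(π / C) + 2 * arsinh a⁻¹) * K ^ n := by
        gcongr
        exact integral_gaussian_mul_inv_sqrt_le hC ha (η 0)
    _ ≤ ((√(π / C) + 2) * (1 + arsinh a⁻¹)) * (K ^ n + 1) := by
        gcongr
        · nlinarith [mul_nonneg (sqrt_nonneg (π / C)) harsinh]
        · exact le_add_of_nonneg_right zero_le_one
    _ = (√(π / C) + 2) * (K ^ n + 1) * (1 + arsinh a⁻¹) := mul_right_comm _ _ _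

/-- for every `C > 0` there is `C' > 0` such that for all
`η ∈ ℝ³` and `a > 0`,
`∫ e^{−C|η−ξ'|²}/|η−ξ'| · (|ξ₁'|²+a²)^{−1/2} dξ'
  ≤ C'·[1 + ln(√(1+(2η₁/a)²)+2|η₁|/a) + ln(√(1+a⁻²)+a⁻¹)]`. -/
theorem gaussian_singular_integral_log_bound :
    ∀ C > (0:ℝ), ∃ C' > (0:ℝ), ∀ η : EuclideanSpace ℝ (Fin 3), ∀ a : ℝ, 0 < a →
      (∫ ξ' : EuclideanSpace ℝ (Fin 3),
          Real.exp (-C * ‖η - ξ'‖ ^ 2) / ‖η - ξ'‖ *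
            (Real.sqrt ((ξ' 0) ^ 2 + a ^ 2))⁻¹) ≤
        C' * (1 + Real.log (Real.sqrt (1 + (2 * η 0 / a) ^ 2) + 2 * |η 0| / a)
            + Real.log (Real.sqrt (1 + (a⁻¹) ^ 2) + a⁻¹)) := by
  intro C hC
  obtain ⟨C', hC', hle⟩ := gaussian_singular_integral_log_bound_general (n := 2) zero_le_one
    (by norm_num) hC
  refine ⟨C', hC', fun η a ha ↦ ?_⟩
  grw [add_assoc, ← arsinh_inv_le_log_add_log (η 0) ha]
  simpa only [rpow_one] using hle η a ha
end
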